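/- The open unit square Ω = (0,1) × (0,1) ⊆ ℝ² is not an isoperimetrically foliated domain: there is no selection ρ ↦ E^(ρ) of minimizers of min{P(E;Ω) : E ⊆ Ω, |E| = ρ}, for ρ ∈ (0,1), such that ρ₁ < ρ₂ implies E^(ρ₁) ⊆ E^(ρ₂) and H¹(∂E^(ρ₁) ∩ ∂E^(ρ₂) ∩ Ω) = 0. -/

import Mathlib

/-!
The square is not foliated because the minimizers of area `1/2` and of area `9π/100` cannot be
nested. The half square shows that a minimizer of area `1/2` has perimeter at most `1`, and the
quarter disc of radius `3/5` shows that a minimizer of area `9π/100` has perimeter at most `3π/10`.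

Call a row or a column of the square crossing if it meets both the set and its complement in
positive measure. Two lower bounds on the perimeter carry the argument.

* `cross_bound`: the perimeter is at least `b |X| + a |Y|`, where `X` and `Y` are the sets of
  crossing columns and rows and `a, b ≥ 0` satisfy `a² + b² ≤ 1`.
* `quarter_bound`: if no column is full and some columns are empty, the perimeter is at least
  `π w / 4 + ρ / w`, where `w = |X|` and `ρ` is the area. This is a calibration argument: columns are
  rearranged by their rank counted from the sides of the square towards an empty column `x₀`, and
  rows and columns are weighted by the two components of the unit normal of a quarter circle of
  radius `w`.

For area `1/2` and perimeter at most `1` the second bound is violated for every `w`, for the set and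
for its complement. So either empty and full columns coexist, almost all rows cross, and by the
first bound almost no column does; or almost all columns cross and almost no row does. In
both cases the set lies over columns (or rows) of total measure `1/2` (`half_structure`). A subset
of area `9π/100` and perimeter at most `3π/10` then has `w ≤ 1/2`, while the second bound reads
`(5 w - 3)² ≤ 0`, forcing `w = 3/5` (`quarter_contra`).

Both lower bounds follow from the weighted slicing inequality `slicing`, proved for sets whose
essential boundary has finite `H¹` measure. The essential boundary is first related to slices
directly: on almost every line, a segment missing the essential boundary lies in `E` or outside `E`
(`row_dichotomy`, by a density argument and Baire's theorem). Hence moving a ball changes the area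
of its part in `E` by at most the displacement times the length of the nearby essential boundary
(`ball_shift`), so that averages of the indicator of `E` over small balls, mollified, are smooth
functions whose gradients have total mass asymptotically at most the perimeter (`exists_approx`).
The inequality follows by slicing these functions and Fatou's lemma.

Minimizers need not be measurable, so they are replaced by measurable hulls.
-/

open MeasureTheory Metric Set Filter Topology ENNReal

noncomputable section

abbrev En (n : ℕ) : Type := EuclideanSpace ℝ (Fin n)

/-- The essential boundary of a set `E ⊆ ℝⁿ`: points where the volume density ratio
`|E ∩ B_r(x)| / |B_r(x)|` converges neither to `0` nor to `1` as `r → 0⁺`. -/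
def essBoundary {n : ℕ} (E : Set (En n)) : Set (En n) :=
  {x | ¬ Tendsto (fun r : ℝ => volume (E ∩ ball x r) / volume (ball x r)) (𝓝[>] 0) (𝓝 0) ∧
       ¬ Tendsto (fun r : ℝ => volume (E ∩ ball x r) / volume (ball x r)) (𝓝[>] 0) (𝓝 1)}

/-- The measure-theoretic boundary of a set `E ⊆ ℝⁿ`:
points `x` with `0 < |E ∩ B_r(x)| < |B_r(x)|` for every `r > 0`. -/
def mtBoundary {n : ℕ} (E : Set (En n)) : Set (En n) :=
  {x | ∀ r : ℝ, 0 < r → 0 < volume (E ∩ ball x r) ∧ volume (E ∩ ball x r) < volume (ball x r)}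

/-- The relative perimeter of `E` in `A`: `P(E; A) = H^{n-1}(∂^e E ∩ A)`. -/
def perim {n : ℕ} (E A : Set (En n)) : ℝ≥0∞ :=
  μH[(n : ℝ) - 1] (essBoundary E ∩ A)

/-- Admissible configurations: triples of subsets of `Ω` with finite relative perimeter,
pairwise Lebesgue-disjoint, with `|E₁| = m₁`, `|E₂| = m₂`, covering `Ω` up to Lebesgue measure. -/
def Admissible {n : ℕ} (Ω : Set (En n)) (m₁ m₂ : ℝ) (E₁ E₂ E₃ : Set (En n)) : Prop :=
  E₁ ⊆ Ω ∧ E₂ ⊆ Ω ∧ E₃ ⊆ Ω ∧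
  perim E₁ Ω < ⊤ ∧ perim E₂ Ω < ⊤ ∧ perim E₃ Ω < ⊤ ∧
  volume (E₁ ∩ E₂) = 0 ∧ volume (E₁ ∩ E₃) = 0 ∧ volume (E₂ ∩ E₃) = 0 ∧
  volume E₁ = ENNReal.ofReal m₁ ∧ volume E₂ = ENNReal.ofReal m₂ ∧
  volume (Ω \ (E₁ ∪ E₂ ∪ E₃)) = 0

/-- The weighted interface functional
`F(E₁,E₂,E₃) = Σ_{i<j} σ_{ij} H^{n-1}(∂^e E_i ∩ ∂^e E_j ∩ Ω)`. -/
def SurfFunc {n : ℕ} (Ω : Set (En n)) (σ₁₂ σ₁₃ σ₂₃ : ℝ) (E₁ E₂ E₃ : Set (En n)) : ℝ≥0∞ :=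
  ENNReal.ofReal σ₁₂ * μH[(n : ℝ) - 1] (essBoundary E₁ ∩ essBoundary E₂ ∩ Ω) +
  ENNReal.ofReal σ₁₃ * μH[(n : ℝ) - 1] (essBoundary E₁ ∩ essBoundary E₃ ∩ Ω) +
  ENNReal.ofReal σ₂₃ * μH[(n : ℝ) - 1] (essBoundary E₂ ∩ essBoundary E₃ ∩ Ω)

/-- `(F₁,F₂,F₃)` is a minimizer of the functional over all admissible configurations. -/
def IsMinimizer {n : ℕ} (Ω : Set (En n)) (m₁ m₂ σ₁₂ σ₁₃ σ₂₃ : ℝ)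
    (F₁ F₂ F₃ : Set (En n)) : Prop :=
  Admissible Ω m₁ m₂ F₁ F₂ F₃ ∧
  ∀ G₁ G₂ G₃ : Set (En n), Admissible Ω m₁ m₂ G₁ G₂ G₃ →
    SurfFunc Ω σ₁₂ σ₁₃ σ₂₃ F₁ F₂ F₃ ≤ SurfFunc Ω σ₁₂ σ₁₃ σ₂₃ G₁ G₂ G₃

/-- `E` solves the relative isoperimetric problem `min {P(F;Ω) : F ⊆ Ω, |F| = ρ}`. -/
def IsIsopMinimizer {n : ℕ} (Ω : Set (En n)) (ρ : ℝ) (E : Set (En n)) : Prop :=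
  E ⊆ Ω ∧ volume E = ENNReal.ofReal ρ ∧
  ∀ F : Set (En n), F ⊆ Ω → volume F = ENNReal.ofReal ρ → perim E Ω ≤ perim F Ω

/-- `Esel` is a selection witnessing that `Ω` is an isoperimetrically foliated domain. -/
def IsIsopFoliation {n : ℕ} (Ω : Set (En n)) (Esel : ℝ → Set (En n)) : Prop :=
  (∀ ρ : ℝ, 0 < ρ → ENNReal.ofReal ρ < volume Ω → IsIsopMinimizer Ω ρ (Esel ρ)) ∧
  (∀ ρ₁ ρ₂ : ℝ, 0 < ρ₁ → ρ₁ < ρ₂ → ENNReal.ofReal ρ₂ < volume Ω →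
    Esel ρ₁ ⊆ Esel ρ₂ ∧
    μH[(n : ℝ) - 1] (mtBoundary (Esel ρ₁) ∩ mtBoundary (Esel ρ₂) ∩ Ω) = 0)

/-- The open unit square `(0,1) × (0,1)` in `ℝ²`. -/
def unitSq : Set (En 2) := {p | p 0 ∈ Ioo (0 : ℝ) 1 ∧ p 1 ∈ Ioo (0 : ℝ) 1}

/-! ### Orthonormal frames and projections -/

/-- The point of the plane with coordinates `p` in the orthonormal frame obtained by rotating the
standard one so that its first vector is `(a, b)` (meant for `a² + b² = 1`). -/
def pt (a b : ℝ) (p : ℝ × ℝ) : En 2 := !₂[a * p.1 - b * p.2, b * p.1 + a * p.2]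

lemma dist_sq_coord (x y : En 2) : dist x y ^ 2 = (x 0 - y 0) ^ 2 + (x 1 - y 1) ^ 2 := by
  rw [EuclideanSpace.dist_eq, Real.sq_sqrt (by positivity)]
  simp [Real.dist_eq, sq_abs]

lemma pt_dist_sq {a b : ℝ} (h : a ^ 2 + b ^ 2 = 1) (p q : ℝ × ℝ) :
    dist (pt a b p) (pt a b q) ^ 2 = (p.1 - q.1) ^ 2 + (p.2 - q.2) ^ 2 := by
  rw [dist_sq_coord]
  simp only [pt, PiLp.toLp_apply, Matrix.cons_val_zero, Matrix.cons_val_one]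
  linear_combination ((p.1 - q.1) ^ 2 + (p.2 - q.2) ^ 2) * h

lemma pt_mem_ball {a b : ℝ} (h : a ^ 2 + b ^ 2 = 1) (p q : ℝ × ℝ) {r : ℝ} (hr : 0 < r) :
    pt a b p ∈ ball (pt a b q) r ↔ (p.1 - q.1) ^ 2 + (p.2 - q.2) ^ 2 < r ^ 2 := by
  rw [mem_ball, ← pt_dist_sq h, sq_lt_sq₀ dist_nonneg hr.le]

lemma pt_surj {a b : ℝ} (h : a ^ 2 + b ^ 2 = 1) (x : En 2) :
    pt a b (a * x 0 + b * x 1, a * x 1 - b * x 0) = x := by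
  ext i
  fin_cases i
  · simp [pt]; linear_combination (x 0) * h
  · simp [pt]; linear_combination (x 1) * h

/-- Rotation of the plane, as a linear isometry. -/
def rotL (a b : ℝ) (h : a ^ 2 + b ^ 2 = 1) : En 2 →ₗᵢ[ℝ] En 2 where
  toFun x := !₂[a * x 0 - b * x 1, b * x 0 + a * x 1]
  map_add' x y := by ext i; fin_cases i <;> simp <;> ring
  map_smul' c x := by ext i; fin_cases i <;> simp <;> ring
  norm_map' x := by
    have : ∀ y : En 2, ‖y‖ ^ 2 = y 0 ^ 2 + y 1 ^ 2 := by
      intro y; simpa using dist_sq_coord y 0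
    rw [← sq_eq_sq₀ (norm_nonneg _) (norm_nonneg _), this, this]
    simp
    linear_combination (x 0 ^ 2 + x 1 ^ 2) * h

lemma pt_continuous (a b : ℝ) : Continuous (pt a b) := by
  unfold pt; fun_prop

lemma pt_mp {a b : ℝ} (h : a ^ 2 + b ^ 2 = 1) : MeasurePreserving (pt a b) volume volume := by
  have h1 : MeasurePreserving (fun p : ℝ × ℝ => (!₂[p.1, p.2] : En 2)) volume volume :=
    (PiLp.volume_preserving_toLp (Fin 2)).comp (volume_preserving_finTwoArrow ℝ).symm
  have h2 := ((rotL a b h).toLinearIsometryEquiv rfl).measurePreserving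
  have h3 := h2.comp h1
  exact h3

lemma pt_preimage {a b : ℝ} (h : a ^ 2 + b ^ 2 = 1) {s : Set (En 2)} (hs : MeasurableSet s) :
    volume (pt a b ⁻¹' s) = volume s :=
  (pt_mp h).measure_preimage hs.nullMeasurableSet

/-- Projecting along the direction `(a, b)` does not increase one-dimensional measure. -/
lemma proj_le {a b : ℝ} (h : a ^ 2 + b ^ 2 = 1) (S : Set (En 2)) :
    volume {y : ℝ | ∃ t, pt a b (t, y) ∈ S} ≤ μH[1] S := by
  have hL : LipschitzWith 1 (fun x : En 2 => a * x 1 - b * x 0) := by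
    apply LipschitzWith.of_dist_le_mul
    intro x y
    rw [NNReal.coe_one, one_mul]
    apply abs_le_of_sq_le_sq _ dist_nonneg
    rw [dist_sq_coord]
    have : (a * (x 1 - y 1) - b * (x 0 - y 0)) ^ 2 + (a * (x 0 - y 0) + b * (x 1 - y 1)) ^ 2
        = (x 0 - y 0) ^ 2 + (x 1 - y 1) ^ 2 := by
      linear_combination ((x 0 - y 0) ^ 2 + (x 1 - y 1) ^ 2) * h
    nlinarith [sq_nonneg (a * (x 0 - y 0) + b * (x 1 - y 1))]
  calc volume {y : ℝ | ∃ t, pt a b (t, y) ∈ S}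
      ≤ volume ((fun x : En 2 => a * x 1 - b * x 0) '' S) := by
        apply measure_mono
        rintro y ⟨t, ht⟩
        refine ⟨_, ht, ?_⟩
        simp [pt]; linear_combination y * h
    _ = μH[1] ((fun x : En 2 => a * x 1 - b * x 0) '' S) := by rw [hausdorffMeasure_real]
    _ ≤ _ := by
        have := (hL.lipschitzOnWith (s := S)).hausdorffMeasure_image_le (d := 1) zero_le_one
        simpa using this

/-! ### Density points -/

/-- The volume density ratio of `E` in the ball `B_r(x)`. -/
def ratio (E : Set (En 2)) (x : En 2) (r : ℝ) : ℝ≥0∞ := volume (E ∩ ball x r) / volume (ball x r)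

/-- The points of density one of `E`. -/
def D1 (E : Set (En 2)) : Set (En 2) := {x | Tendsto (ratio E x) (𝓝[>] 0) (𝓝 1)}

/-- The points of density zero of `E`. -/
def D0 (E : Set (En 2)) : Set (En 2) := {x | Tendsto (ratio E x) (𝓝[>] 0) (𝓝 0)}

lemma mem_ess {E : Set (En 2)} {x : En 2} : x ∈ essBoundary E ↔ x ∉ D0 E ∧ x ∉ D1 E := Iff.rfl

lemma vball (x : En 2) {r : ℝ} (hr : 0 ≤ r) :
    volume (ball x r) = ENNReal.ofReal (Real.pi * r ^ 2) := by
  rw [EuclideanSpace.volume_ball_fin_two, ← ENNReal.ofReal_pow hr,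
    ← ENNReal.ofReal_mul (by positivity), mul_comm]

lemma vball_pos (x : En 2) {r : ℝ} (hr : 0 < r) : volume (ball x r) ≠ 0 :=
  (measure_ball_pos _ _ hr).ne'

lemma vball_top (x : En 2) (r : ℝ) : volume (ball x r) ≠ ⊤ := measure_ball_lt_top.ne

lemma D0_disj {E : Set (En 2)} {x : En 2} (h0 : x ∈ D0 E) (h1 : x ∈ D1 E) : False :=
  zero_ne_one (tendsto_nhds_unique h0 h1)

lemma ratio_compl {E : Set (En 2)} (hE : MeasurableSet E) (x : En 2) {r : ℝ} (hr : 0 < r) :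
    ratio Eᶜ x r = 1 - ratio E x r := by
  have h := measure_inter_add_sdiff (μ := volume) (ball x r) hE
  have h2 : volume (Eᶜ ∩ ball x r) = volume (ball x r) - volume (E ∩ ball x r) := by
    rw [← h, inter_comm E]
    rw [ENNReal.add_sub_cancel_left (measure_ne_top_of_subset inter_subset_left (vball_top x r))]
    rw [sdiff_eq, inter_comm]
  rw [ratio, ratio, h2, ENNReal.sub_div (fun _ _ => vball_pos x hr),
    ENNReal.div_self (vball_pos x hr) (vball_top x r)]

lemma ratio_le_one (E : Set (En 2)) (x : En 2) (r : ℝ) : ratio E x r ≤ 1 :=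
  ENNReal.div_le_of_le_mul (by rw [one_mul]; exact measure_mono inter_subset_right)

lemma D1_compl {E : Set (En 2)} (hE : MeasurableSet E) : D1 Eᶜ = D0 E := by
  ext x
  constructor
  · intro h
    have : Tendsto (fun r => 1 - ratio Eᶜ x r) (𝓝[>] 0) (𝓝 (1 - 1)) :=
      ENNReal.Tendsto.sub tendsto_const_nhds h (by simp)
    rw [tsub_self] at this
    refine this.congr' ?_
    filter_upwards [self_mem_nhdsWithin] with r hr
    rw [ratio_compl hE x hr, ENNReal.sub_sub_cancel (by simp) (ratio_le_one _ _ _)]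
  · intro h
    have : Tendsto (fun r => 1 - ratio E x r) (𝓝[>] 0) (𝓝 (1 - 0)) :=
      ENNReal.Tendsto.sub tendsto_const_nhds h (by simp)
    rw [tsub_zero] at this
    refine this.congr' ?_
    filter_upwards [self_mem_nhdsWithin] with r hr
    rw [ratio_compl hE x hr]

lemma D0_compl {E : Set (En 2)} (hE : MeasurableSet E) : D0 Eᶜ = D1 E := by
  rw [← D1_compl hE.compl, compl_compl]

lemma essBoundary_compl {E : Set (En 2)} (hE : MeasurableSet E) :
    essBoundary Eᶜ = essBoundary E := by
  ext x
  rw [mem_ess, mem_ess, D0_compl hE, D1_compl hE, and_comm]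

lemma ae_density {E : Set (En 2)} (hE : MeasurableSet E) :
    ∀ᵐ x : En 2, (x ∈ E → x ∈ D1 E) ∧ (x ∉ E → x ∈ D0 E) := by
  filter_upwards [Besicovitch.ae_tendsto_measure_inter_div_of_measurableSet volume hE] with x hx
  have key : ∀ r, volume (E ∩ closedBall x r) / volume (closedBall x r) = ratio E x r := by
    intro r
    rw [ratio]
    congr 1
    · apply measure_congr
      have : closedBall x r =ᵐ[volume] ball x r := by
        rw [← ball_union_sphere]
        exact union_ae_eq_left_of_ae_eq_empty (ae_eq_empty.2 (Measure.addHaar_sphere volume x r))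
      exact (ae_eq_refl E).inter this
    · rw [Measure.addHaar_closedBall_eq_addHaar_ball]
  simp only [key] at hx
  constructor
  · intro h; simpa [h, D1] using hx
  · intro h; simpa [h, D0] using hx

lemma ae_density_iff {E : Set (En 2)} (hE : MeasurableSet E) :
    ∀ᵐ x : En 2, (x ∈ E ↔ x ∈ D1 E) ∧ (x ∉ E ↔ x ∈ D0 E) := by
  filter_upwards [ae_density hE] with x hx
  refine ⟨⟨hx.1, fun h => ?_⟩, ⟨hx.2, fun h h' => D0_disj h (hx.1 h')⟩⟩
  by_contra hnot
  exact D0_disj (hx.2 hnot) h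

/-- The points where `E` fills only a small fraction of every ball of radius below `1 / (k + 1)`. -/
def Hk (k : ℕ) (E : Set (En 2)) : Set (En 2) :=
  {x | ∀ r : ℝ, 0 < r → r < 1 / (k + 1) → volume (E ∩ ball x r) ≤ ENNReal.ofReal (r ^ 2 / 10)}

lemma D0_sub_Hk {E : Set (En 2)} {x : En 2} (hx : x ∈ D0 E) : ∃ k, x ∈ Hk k E := by
  have h1 : ∀ᶠ r in 𝓝[>] (0 : ℝ), ratio E x r < ENNReal.ofReal (1 / (10 * Real.pi)) :=
    hx.eventually (gt_mem_nhds (by simp; positivity))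
  obtain ⟨δ, hδ, h2⟩ := mem_nhdsGT_iff_exists_Ioo_subset.1 h1
  obtain ⟨k, hk⟩ := exists_nat_one_div_lt (show (0 : ℝ) < δ from hδ)
  refine ⟨k, fun r hr hrk => ?_⟩
  have h3 : ratio E x r < ENNReal.ofReal (1 / (10 * Real.pi)) := h2 ⟨hr, hrk.trans hk⟩
  rw [ratio, ENNReal.div_lt_iff (Or.inl (vball_pos x hr)) (Or.inl (vball_top x r)), vball x hr.le,
    ← ENNReal.ofReal_mul (by positivity)] at h3
  refine h3.le.trans (ENNReal.ofReal_le_ofReal (le_of_eq ?_))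
  field_simp

lemma Hk_not_D1 {E : Set (En 2)} {k : ℕ} {x : En 2} (hx : x ∈ Hk k E) : x ∉ D1 E := by
  intro h
  have h1 : ∀ᶠ r in 𝓝[>] (0 : ℝ), ENNReal.ofReal (1 / 2) < ratio E x r :=
    h.eventually (lt_mem_nhds (by
      rw [← ENNReal.ofReal_one, ENNReal.ofReal_lt_ofReal_iff] <;> norm_num))
  have h2 : ∀ᶠ r in 𝓝[>] (0 : ℝ), r < 1 / ((k : ℝ) + 1) :=
    nhdsWithin_le_nhds (gt_mem_nhds (by positivity))
  obtain ⟨r, hr1, hr2, hr⟩ := (h1.and (h2.and self_mem_nhdsWithin)).exists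
  have hr : 0 < r := hr
  have h3 := hx r hr hr2
  rw [ratio, ENNReal.lt_div_iff_mul_lt (Or.inl (vball_pos x hr)) (Or.inl (vball_top x r)),
    vball x hr.le, ← ENNReal.ofReal_mul (by positivity)] at hr1
  have h4 := (ENNReal.ofReal_lt_ofReal_iff_of_nonneg (by positivity)).1 (hr1.trans_le h3)
  nlinarith [Real.pi_gt_three, mul_pos hr hr]

lemma Hk_closed (k : ℕ) (E : Set (En 2)) : IsClosed (Hk k E) := by
  rw [← isSeqClosed_iff_isClosed]
  intro u x hu hx r hr hrk
  -- every larger radius `ρ` works at `x`, since `B_r(x) ⊆ B_ρ(u n)` for large `n`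
  have h1 : ∀ r' : ℝ, r < r' → r' < 1 / (k + 1) →
      volume (E ∩ ball x r) ≤ ENNReal.ofReal (r' ^ 2 / 10) := by
    intro r' h h'
    obtain ⟨n, hn⟩ := (hx.eventually (ball_mem_nhds x (sub_pos.2 h))).exists
    refine le_trans (measure_mono (inter_subset_inter_right _ ?_)) (hu n r' (hr.trans h) h')
    apply ball_subset_ball'
    rw [dist_comm]; linarith [mem_ball.1 hn]
  have h2 : Tendsto (fun r' : ℝ => ENNReal.ofReal (r' ^ 2 / 10)) (𝓝[>] r)
      (𝓝 (ENNReal.ofReal (r ^ 2 / 10))) := by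
    apply Tendsto.mono_left _ nhdsWithin_le_nhds
    apply (ENNReal.continuous_ofReal.comp (by fun_prop : Continuous fun r' : ℝ => r' ^ 2 / 10)).tendsto
  refine ge_of_tendsto h2 ?_
  filter_upwards [self_mem_nhdsWithin, nhdsWithin_le_nhds (gt_mem_nhds hrk)] with ρ hlt hlt2
  exact h1 ρ hlt hlt2

/-! ### Density-one segments on almost every line -/

lemma ae_slice_swap {p : ℝ × ℝ → Prop} (hp : ∀ᵐ q : ℝ × ℝ, p q) : ∀ᵐ y : ℝ, ∀ᵐ t : ℝ, p (t, y) := by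
  have h : ∀ᵐ q : ℝ × ℝ, p q.swap :=
    (Measure.measurePreserving_swap (μ := (volume : Measure ℝ))
      (ν := (volume : Measure ℝ))).quasiMeasurePreserving.ae hp
  exact Measure.ae_ae_of_ae_prod h

lemma ae_rows {a b : ℝ} (h : a ^ 2 + b ^ 2 = 1) {p : En 2 → Prop} (hp : ∀ᵐ x, p x) :
    ∀ᵐ y : ℝ, ∀ᵐ t : ℝ, p (pt a b (t, y)) :=
  ae_slice_swap ((pt_mp h).quasiMeasurePreserving.ae hp)

/-- Almost no line of direction `(a, b)` contains a point of `Hk k E` that bounds a segment of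
density-one points of `E`. The endpoints are confined to a window `[τ, τ + σ)` shorter than these
segments. If the set of bad lines were not null, many of them would meet a strip of width `2r`
around a density point; the ball of radius `3r` at the (almost) lowest endpoint would contain too
large a part of `E`. -/
lemma bad_null {E : Set (En 2)} (hE : MeasurableSet E) {a b : ℝ} (h : a ^ 2 + b ^ 2 = 1)
    (k : ℕ) {σ : ℝ} (hσ : 0 < σ) (τ : ℝ) :
    volume {y : ℝ | ∃ t ∈ Ico τ (τ + σ), pt a b (t, y) ∈ Hk k E ∧
      ∀ s ∈ Ioo (t - 2 * σ) t, pt a b (s, y) ∈ D1 E} = 0 := by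
  set Z : Set ℝ := {y : ℝ | ∃ t ∈ Ico τ (τ + σ), pt a b (t, y) ∈ Hk k E ∧
      ∀ s ∈ Ioo (t - 2 * σ) t, pt a b (s, y) ∈ D1 E} with hZ
  by_contra hne
  have hne' : (volume.restrict Z) ≠ 0 := by rwa [Ne, Measure.restrict_eq_zero]
  have : (ae (volume.restrict Z)).NeBot := ae_neBot.2 hne'
  obtain ⟨y0, hy0⟩ := (Besicovitch.ae_tendsto_measure_inter_div volume Z).exists
  have e1 : ∀ᶠ r in 𝓝[>] (0 : ℝ), ENNReal.ofReal (1 / 2) <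
      volume (Z ∩ closedBall y0 r) / volume (closedBall y0 r) :=
    hy0.eventually (lt_mem_nhds (by
      rw [← ENNReal.ofReal_one, ENNReal.ofReal_lt_ofReal_iff] <;> norm_num))
  have e2 : ∀ᶠ r in 𝓝[>] (0 : ℝ), r < 1 / (3 * ((k : ℝ) + 1)) :=
    nhdsWithin_le_nhds (gt_mem_nhds (by positivity))
  have e3 : ∀ᶠ r in 𝓝[>] (0 : ℝ), r < σ := nhdsWithin_le_nhds (gt_mem_nhds hσ)
  obtain ⟨r, hr1, hr2, hr3, hr⟩ := (e1.and (e2.and (e3.and self_mem_nhdsWithin))).exists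
  have hr : 0 < r := hr
  rw [Real.volume_closedBall, ENNReal.lt_div_iff_mul_lt (Or.inl (by simp; positivity))
    (Or.inl ENNReal.ofReal_ne_top), ← ENNReal.ofReal_mul (by positivity)] at hr1
  have hr1 : ENNReal.ofReal r < volume (Z ∩ closedBall y0 r) := by
    convert hr1 using 2; ring
  set W := Z ∩ closedBall y0 r
  have hWne : W.Nonempty := by
    rw [nonempty_iff_ne_empty]; intro h0; rw [h0] at hr1; simp at hr1
  -- choose an endpoint that is minimal up to `r / 100`
  set T : Set ℝ := {t | ∃ y ∈ W, t ∈ Ico τ (τ + σ) ∧ pt a b (t, y) ∈ Hk k E ∧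
      ∀ s ∈ Ioo (t - 2 * σ) t, pt a b (s, y) ∈ D1 E}
  have hTne : T.Nonempty := by
    obtain ⟨y, hy⟩ := hWne
    obtain ⟨t, ht⟩ := hy.1
    exact ⟨t, y, hy, ht⟩
  have hTb : BddBelow T := ⟨τ, by rintro t ⟨y, -, ht, -⟩; exact ht.1⟩
  obtain ⟨t1, ⟨y1, hy1, ht1, hH1, -⟩, hlt⟩ :=
    exists_lt_of_csInf_lt hTne (show sInf T < sInf T + r / 100 by linarith)
  have hseg : ∀ y ∈ W, ∀ s ∈ Ioo (t1 - r) (t1 - r / 100), pt a b (s, y) ∈ D1 E := by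
    intro y hy s hs
    obtain ⟨t, ht⟩ := hy.1
    have htT : t ∈ T := ⟨y, hy, ht⟩
    have := csInf_le hTb htT
    refine ht.2.2 s ⟨?_, ?_⟩
    · linarith [hs.1, ht.1.2, ht1.1]
    · linarith [hs.2]
  have hup := hH1 (3 * r) (by positivity) (by
    rw [lt_div_iff₀ (by positivity)] at hr2 ⊢; linarith)
  rw [← pt_preimage h (hE.inter measurableSet_ball)] at hup
  set Q := pt a b ⁻¹' (E ∩ ball (pt a b (t1, y1)) (3 * r)) with hQ
  have hQm : MeasurableSet Q := (pt_continuous a b).measurable (hE.inter measurableSet_ball)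
  have hQv : volume Q = ∫⁻ y : ℝ, volume ((fun t : ℝ => (t, y)) ⁻¹' Q) :=
    Measure.prod_apply_symm hQm
  have hae := ae_rows h (ae_density_iff hE)
  have hW : volume W ≤ volume {y : ℝ | ENNReal.ofReal (99 / 100 * r) ≤
      volume ((fun t : ℝ => (t, y)) ⁻¹' Q)} := by
    apply measure_mono_ae
    filter_upwards [hae] with y hy hyW
    show ENNReal.ofReal (99 / 100 * r) ≤ volume ((fun t : ℝ => (t, y)) ⁻¹' Q)
    have hI : volume (Ioo (t1 - r) (t1 - r / 100)) = ENNReal.ofReal (99 / 100 * r) := by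
      rw [Real.volume_Ioo]; congr 1; ring
    rw [← hI]
    apply measure_mono_ae
    filter_upwards [hy] with s hs hsI
    refine ⟨hs.1.2 (hseg y hyW s hsI), ?_⟩
    rw [pt_mem_ball h _ _ (by positivity)]
    have b1 := hyW.2
    have b2 := hy1.2
    rw [mem_closedBall, Real.dist_eq, abs_le] at b1 b2
    have c1 : (s - t1) ^ 2 ≤ r ^ 2 := by
      rw [sq_le_sq, abs_of_pos hr, abs_le]; constructor <;> linarith [hsI.1, hsI.2]
    have c2 : (y - y1) ^ 2 ≤ (2 * r) ^ 2 := by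
      rw [sq_le_sq, abs_of_pos (by positivity : 0 < 2 * r), abs_le]; constructor <;> linarith
    simp only
    nlinarith [mul_pos hr hr]
  have hM := mul_meas_ge_le_lintegral (μ := (volume : Measure ℝ))
    (measurable_measure_prodMk_right hQm : Measurable fun y : ℝ =>
      (volume : Measure ℝ) ((fun t : ℝ => (t, y)) ⁻¹' Q)) (ENNReal.ofReal (99 / 100 * r))
  rw [← hQv] at hM
  have hfin : ENNReal.ofReal (99 / 100 * r) * ENNReal.ofReal r ≤ ENNReal.ofReal ((3 * r) ^ 2 / 10) :=
    calc _ ≤ ENNReal.ofReal (99 / 100 * r) * volume W := by gcongr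
      _ ≤ _ := by gcongr
      _ ≤ _ := hM
      _ ≤ _ := hup
  rw [← ENNReal.ofReal_mul (by positivity), ENNReal.ofReal_le_ofReal_iff (by positivity)] at hfin
  nlinarith [mul_pos hr hr]

/-- On almost every line of direction `(a, b)`, no point of any `Hk k E` bounds from above a
segment of density-one points of `E`. -/
lemma no_bad {E : Set (En 2)} (hE : MeasurableSet E) {a b : ℝ} (h : a ^ 2 + b ^ 2 = 1) :
    ∀ᵐ y : ℝ, ∀ k : ℕ, ∀ s t : ℝ, s < t → pt a b (t, y) ∈ Hk k E →
      ¬ ∀ u ∈ Ioo s t, pt a b (u, y) ∈ D1 E := by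
  have key : ∀ᵐ y : ℝ, ∀ k m : ℕ, ∀ j : ℤ, y ∉ {y : ℝ | ∃ t ∈ Ico (j * (1 / ((m : ℝ) + 1)))
      (j * (1 / ((m : ℝ) + 1)) + 1 / ((m : ℝ) + 1)), pt a b (t, y) ∈ Hk k E ∧
      ∀ s ∈ Ioo (t - 2 * (1 / ((m : ℝ) + 1))) t, pt a b (s, y) ∈ D1 E} := by
    simp only [ae_all_iff]
    intro k m j
    exact measure_eq_zero_iff_ae_notMem.1 (bad_null hE h k (by positivity) _)
  filter_upwards [key] with y hy k s t hst hH hD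
  obtain ⟨m, hm⟩ := exists_nat_one_div_lt (show (0 : ℝ) < (t - s) / 2 by linarith)
  set σ : ℝ := 1 / ((m : ℝ) + 1)
  have hσ : 0 < σ := by positivity
  refine hy k m ⌊t / σ⌋ ⟨t, ⟨?_, ?_⟩, hH, fun u hu => hD u ⟨by linarith [hu.1], hu.2⟩⟩
  · have := Int.floor_le (t / σ)
    rwa [le_div_iff₀ hσ] at this
  · have := Int.lt_floor_add_one (t / σ)
    rw [div_lt_iff₀ hσ] at this
    linarith

/-- A parametrized line is `Nice` for `E` if no point of any `Hk k E` bounds, on either side, a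
segment of density-one points of `E`. -/
def Nice (S : ℝ → En 2) (E : Set (En 2)) : Prop :=
  ∀ k : ℕ, ∀ s t : ℝ, s < t →
    (S t ∈ Hk k E → ¬ ∀ u ∈ Ioo s t, S u ∈ D1 E) ∧ (S s ∈ Hk k E → ¬ ∀ u ∈ Ioo s t, S u ∈ D1 E)

lemma ae_nice {E : Set (En 2)} (hE : MeasurableSet E) {a b : ℝ} (h : a ^ 2 + b ^ 2 = 1) :
    ∀ᵐ y : ℝ, Nice (fun t => pt a b (t, y)) E := by
  -- the frame rotated by a half turn exchanges the two ends of a segment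
  have h' : (-a) ^ 2 + (-b) ^ 2 = 1 := by simpa using h
  have key := (Measure.measurePreserving_neg (volume : Measure ℝ)).quasiMeasurePreserving.ae
    (no_bad hE h')
  have hpt : ∀ t y, pt (-a) (-b) (-t, -y) = pt a b (t, y) := by
    intro t y; simp [pt]
  filter_upwards [no_bad hE h, key] with y h1 h2 k s t hst
  refine ⟨h1 k s t hst, fun hs hD => h2 k (-t) (-s) (by linarith) (by rwa [hpt]) fun u hu => ?_⟩
  have := hpt (-u) y
  rw [neg_neg] at this
  rw [this]
  exact hD _ ⟨by linarith [hu.2], by linarith [hu.1]⟩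

/-! ### Segments missing the essential boundary -/

/-- On a nice line, the common boundary of the density-one and density-zero points of a segment has
no portion inside a single `Hk k E`: a density-one point near `t0` would lie in a gap of that
portion, and an endpoint of the gap would bound a segment of density-one points. -/
lemma nice_core {S : ℝ → En 2} {E : Set (En 2)} (hN : Nice S E) {lo hi : ℝ} {k : ℕ}
    (hAB : ∀ u ∈ Icc lo hi, S u ∈ D1 E ∨ S u ∈ D0 E) {t0 δ : ℝ} (hδ : 0 < δ)
    (ht0 : t0 ∈ closure {u ∈ Icc lo hi | S u ∈ D1 E} ∩ closure {u ∈ Icc lo hi | S u ∈ D0 E})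
    (hK : ∀ u ∈ closure {u ∈ Icc lo hi | S u ∈ D1 E} ∩ closure {u ∈ Icc lo hi | S u ∈ D0 E},
      dist u t0 < δ → S u ∈ Hk k E) : False := by
  set A := {u ∈ Icc lo hi | S u ∈ D1 E} with hA
  set B := {u ∈ Icc lo hi | S u ∈ D0 E} with hB
  set K := closure A ∩ closure B with hKdef
  have hKc : IsClosed K := isClosed_closure.inter isClosed_closure
  have hKI : K ⊆ Icc lo hi := fun u hu =>
    closure_minimal (fun v hv => hv.1) isClosed_Icc hu.1
  have hconn : ∀ u v, u ≤ v → u ∈ Icc lo hi → v ∈ Icc lo hi → (u ∈ A ∧ v ∈ B ∨ u ∈ B ∧ v ∈ A) →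
      ∃ w ∈ Icc u v, w ∈ K := by
    intro u v huv hu hv h
    have hsub : Icc u v ⊆ Icc lo hi := Icc_subset_Icc hu.1 hv.2
    have hcov : Icc u v ⊆ closure A ∪ closure B := by
      intro w hw
      rcases hAB w (hsub hw) with h1 | h1
      · exact Or.inl (subset_closure ⟨hsub hw, h1⟩)
      · exact Or.inr (subset_closure ⟨hsub hw, h1⟩)
    have := isPreconnected_closed_iff.1 (isPreconnected_Icc (a := u) (b := v)) _ _
      (isClosed_closure (s := A)) (isClosed_closure (s := B)) hcov
    have hul : u ∈ Icc u v := left_mem_Icc.2 huv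
    have hvr : v ∈ Icc u v := right_mem_Icc.2 huv
    rcases h with ⟨h1, h2⟩ | ⟨h1, h2⟩
    · exact this ⟨u, hul, subset_closure h1⟩ ⟨v, hvr, subset_closure h2⟩
    · exact this ⟨v, hvr, subset_closure h2⟩ ⟨u, hul, subset_closure h1⟩
  obtain ⟨b, hbA, hbd⟩ := Metric.mem_closure_iff.1 ht0.1 δ hδ
  have hbK : b ∉ K := fun h => Hk_not_D1 (hK b h (by rwa [dist_comm])) hbA.2
  have ht0A : t0 ∉ A := fun h => Hk_not_D1 (hK t0 ht0 (by simpa using hδ)) h.2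
  have hbt : b ≠ t0 := fun h => ht0A (h ▸ hbA)
  rw [Real.dist_eq, abs_lt] at hbd
  rcases lt_or_gt_of_ne hbt with hlt | hlt
  · have hne : (K ∩ Icc b t0).Nonempty := ⟨t0, ht0, hlt.le, le_rfl⟩
    have hbdd : BddBelow (K ∩ Icc b t0) := ⟨b, fun u hu => hu.2.1⟩
    have ht1 := (hKc.inter isClosed_Icc).csInf_mem hne hbdd
    set t1 := sInf (K ∩ Icc b t0)
    have hb1 : b < t1 := lt_of_le_of_ne ht1.2.1 fun h => hbK (h ▸ ht1.1)
    refine (hN k b t1 hb1).1 (hK t1 ht1.1 ?_) fun u hu => ?_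
    · rw [Real.dist_eq, abs_lt]; constructor <;> linarith [ht1.2.2]
    · have huI : u ∈ Icc lo hi := ⟨hbA.1.1.trans hu.1.le, hu.2.le.trans (hKI ht1.1).2⟩
      rcases hAB u huI with h1 | h1
      · exact h1
      · obtain ⟨w, hw, hwK⟩ := hconn b u hu.1.le hbA.1 huI (Or.inl ⟨hbA, huI, h1⟩)
        have := csInf_le hbdd ⟨hwK, hw.1, by linarith [hw.2, hu.2, ht1.2.2]⟩
        linarith [hw.2, hu.2]
  · have hne : (K ∩ Icc t0 b).Nonempty := ⟨t0, ht0, le_rfl, hlt.le⟩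
    have hbdd : BddAbove (K ∩ Icc t0 b) := ⟨b, fun u hu => hu.2.2⟩
    have ht1 := (hKc.inter isClosed_Icc).csSup_mem hne hbdd
    set t1 := sSup (K ∩ Icc t0 b)
    have hb1 : t1 < b := lt_of_le_of_ne ht1.2.2 fun h => hbK (h ▸ ht1.1)
    refine (hN k t1 b hb1).2 (hK t1 ht1.1 ?_) fun u hu => ?_
    · rw [Real.dist_eq, abs_lt]; constructor <;> linarith [ht1.2.1]
    · have huI : u ∈ Icc lo hi := ⟨(hKI ht1.1).1.trans hu.1.le, hu.2.le.trans hbA.1.2⟩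
      rcases hAB u huI with h1 | h1
      · exact h1
      · obtain ⟨w, hw, hwK⟩ := hconn u b hu.2.le huI hbA.1 (Or.inr ⟨⟨huI, h1⟩, hbA⟩)
        have := le_csSup hbdd ⟨hwK, by linarith [hw.1, hu.1, ht1.2.1], hw.2⟩
        linarith [hw.1, hu.1]

/-- A segment of a nice line that misses the essential boundary consists of points of one kind.
By Baire's theorem, the common boundary of the two kinds would otherwise contain a portion inside
a single `Hk k E` or `Hk k Eᶜ`, and an endpoint of a gap of that portion contradicts niceness. -/
lemma nice_dichotomy {S : ℝ → En 2} (hS : Continuous S) {E : Set (En 2)} (hE : MeasurableSet E)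
    (hN : Nice S E) (hN' : Nice S Eᶜ) {α β : ℝ} (hmiss : ∀ u ∈ Ioo α β, S u ∉ essBoundary E) :
    (∀ u ∈ Ioo α β, S u ∈ D1 E) ∨ (∀ u ∈ Ioo α β, S u ∈ D0 E) := by
  have hor : ∀ u ∈ Ioo α β, S u ∈ D1 E ∨ S u ∈ D0 E := by
    intro u hu
    have := hmiss u hu
    rw [mem_ess] at this
    tauto
  by_contra hcon
  push Not at hcon
  obtain ⟨⟨p, hp, hp1⟩, ⟨q, hq, hq0⟩⟩ := hcon
  have hp0 : S p ∈ D0 E := (hor p hp).resolve_left hp1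
  have hq1 : S q ∈ D1 E := (hor q hq).resolve_right hq0
  set lo := min p q
  set hi := max p q
  have hI : Icc lo hi ⊆ Ioo α β := fun u hu =>
    ⟨(lt_min hp.1 hq.1).trans_le hu.1, hu.2.trans_lt (max_lt hp.2 hq.2)⟩
  have hAB : ∀ u ∈ Icc lo hi, S u ∈ D1 E ∨ S u ∈ D0 E := fun u hu => hor u (hI hu)
  set A := {u ∈ Icc lo hi | S u ∈ D1 E} with hA
  set B := {u ∈ Icc lo hi | S u ∈ D0 E} with hB
  have hpI : p ∈ Icc lo hi := ⟨min_le_left _ _, le_max_left _ _⟩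
  have hqI : q ∈ Icc lo hi := ⟨min_le_right _ _, le_max_right _ _⟩
  set K := closure A ∩ closure B with hKdef
  have hKc : IsClosed K := isClosed_closure.inter isClosed_closure
  have hKI : K ⊆ Icc lo hi := fun u hu =>
    closure_minimal (fun v hv => hv.1) isClosed_Icc hu.1
  have hKne : K.Nonempty := by
    have hcov : Icc lo hi ⊆ closure A ∪ closure B := by
      intro w hw
      rcases hAB w hw with h1 | h1
      · exact Or.inl (subset_closure ⟨hw, h1⟩)
      · exact Or.inr (subset_closure ⟨hw, h1⟩)
    obtain ⟨w, -, hw⟩ := isPreconnected_closed_iff.1 (isPreconnected_Icc (a := lo) (b := hi)) _ _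
      (isClosed_closure (s := A)) (isClosed_closure (s := B)) hcov
      ⟨q, hqI, subset_closure ⟨hqI, hq1⟩⟩ ⟨p, hpI, subset_closure ⟨hpI, hp0⟩⟩
    exact ⟨w, hw⟩
  have : CompleteSpace K := hKc.completeSpace_coe
  have : Nonempty K := hKne.to_subtype
  obtain ⟨⟨c, k⟩, ⟨t0, ht0⟩⟩ := nonempty_interior_of_iUnion_of_closed
    (f := fun i : Bool × ℕ => {u : K | S u ∈ Hk i.2 (if i.1 then E else Eᶜ)})
    (fun i => (Hk_closed _ _).preimage (hS.comp continuous_subtype_val))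
    (by
      rw [eq_univ_iff_forall]
      rintro ⟨u, hu⟩
      rw [mem_iUnion]
      rcases hAB u (hKI hu) with h1 | h1
      · rw [← D0_compl hE] at h1
        obtain ⟨k, hk⟩ := D0_sub_Hk h1
        exact ⟨(false, k), by simpa using hk⟩
      · obtain ⟨k, hk⟩ := D0_sub_Hk h1
        exact ⟨(true, k), by simpa using hk⟩)
  rw [mem_interior_iff_mem_nhds, Metric.mem_nhds_iff] at ht0
  obtain ⟨δ, hδ, hsub⟩ := ht0
  have hK : ∀ u ∈ K, dist u t0 < δ → S u ∈ Hk k (if c then E else Eᶜ) := by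
    intro u hu hd
    have h5 : (⟨u, hu⟩ : K) ∈ ball t0 δ := by rw [mem_ball, Subtype.dist_eq]; exact hd
    have h6 := hsub h5
    exact h6
  have ht0K := t0.2
  generalize (t0 : ℝ) = t at hK ht0K
  cases c
  · rw [if_neg (by simp)] at hK
    refine nice_core (lo := lo) (hi := hi) hN' (k := k) ?_ hδ (t0 := t) ?_ ?_
    · intro u hu; rw [D0_compl hE, D1_compl hE]; exact (hAB u hu).symm
    · rw [D0_compl hE, D1_compl hE, inter_comm]; exact ht0K
    · rw [D0_compl hE, D1_compl hE, inter_comm]; exact hK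
  · rw [if_pos rfl] at hK
    exact nice_core (lo := lo) (hi := hi) hN (k := k) hAB hδ (t0 := t) ht0K hK

/-- Almost every line of direction `(a, b)`: a segment missing the essential boundary lies in `E`
or outside `E`, up to null sets. -/
lemma row_dichotomy {E : Set (En 2)} (hE : MeasurableSet E) {a b : ℝ} (h : a ^ 2 + b ^ 2 = 1) :
    ∀ᵐ y : ℝ, ∀ α β : ℝ, (∀ u ∈ Ioo α β, pt a b (u, y) ∉ essBoundary E) →
      (∀ᵐ u : ℝ, u ∈ Ioo α β → pt a b (u, y) ∈ E) ∨
      (∀ᵐ u : ℝ, u ∈ Ioo α β → pt a b (u, y) ∉ E) := by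
  filter_upwards [ae_nice hE h, ae_nice hE.compl h, ae_rows h (ae_density_iff hE)] with
    y h1 h2 h3 α β hm
  rcases nice_dichotomy ((pt_continuous a b).comp (by fun_prop : Continuous fun t : ℝ => (t, y)))
    hE h1 h2 hm with h4 | h4
  · left; filter_upwards [h3] with u hu hI using hu.1.2 (h4 u hI)
  · right; filter_upwards [h3] with u hu hI using hu.2.2 (h4 u hI)

/-- Moving a ball of radius `r` by `τ` changes the measure of its part inside `E` by at most `τ`
times the length of the essential boundary in the enlarged ball. -/
lemma ball_shift_pt {E : Set (En 2)} (hE : MeasurableSet E) {a b : ℝ} (h : a ^ 2 + b ^ 2 = 1)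
    (p : ℝ × ℝ) {r τ : ℝ} (hr : 0 < r) (hτ : 0 < τ) :
    volume (E ∩ ball (pt a b (p.1 + τ, p.2)) r) ≤ volume (E ∩ ball (pt a b p) r) +
      ENNReal.ofReal τ * μH[1] (essBoundary E ∩ ball (pt a b p) (r + τ)) := by
  set Z := {y : ℝ | ∃ t, pt a b (t, y) ∈ essBoundary E ∩ ball (pt a b p) (r + τ)} with hZ
  have hZle := proj_le h (essBoundary E ∩ ball (pt a b p) (r + τ))
  have hm : ∀ q, MeasurableSet (pt a b ⁻¹' (E ∩ ball (pt a b q) r)) := fun q =>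
    (pt_continuous a b).measurable (hE.inter measurableSet_ball)
  have hv : ∀ q, volume (E ∩ ball (pt a b q) r) =
      ∫⁻ y : ℝ, volume ((fun t : ℝ => (t, y)) ⁻¹' (pt a b ⁻¹' (E ∩ ball (pt a b q) r))) := by
    intro q
    rw [← pt_preimage h (hE.inter measurableSet_ball)]
    exact Measure.prod_apply_symm (hm q)
  rw [hv, hv]
  calc _ ≤ ∫⁻ y : ℝ, (volume ((fun t : ℝ => (t, y)) ⁻¹' (pt a b ⁻¹' (E ∩ ball (pt a b p) r))) +
        (toMeasurable volume Z).indicator (fun _ => ENNReal.ofReal τ) y) := by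
        apply lintegral_mono_ae
        filter_upwards [row_dichotomy hE h] with y hy
        by_cases hyr : r ^ 2 - (y - p.2) ^ 2 ≤ 0
        · have : ((fun t : ℝ => (t, y)) ⁻¹' (pt a b ⁻¹' (E ∩ ball (pt a b (p.1 + τ, p.2)) r))) = ∅ := by
            rw [eq_empty_iff_forall_notMem]
            rintro t ⟨-, ht⟩
            rw [pt_mem_ball h _ _ hr] at ht
            simp only at ht
            nlinarith [sq_nonneg (t - (p.1 + τ))]
          rw [this]; simp
        push Not at hyr
        set l := Real.sqrt (r ^ 2 - (y - p.2) ^ 2) with hl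
        have hl0 : 0 < l := Real.sqrt_pos.2 hyr
        have hl2 : l ^ 2 = r ^ 2 - (y - p.2) ^ 2 := Real.sq_sqrt hyr.le
        have hsl : ∀ c : ℝ, ((fun t : ℝ => (t, y)) ⁻¹' (pt a b ⁻¹' (E ∩ ball (pt a b (c, p.2)) r))) =
            {t | pt a b (t, y) ∈ E} ∩ Ioo (c - l) (c + l) := by
          intro c
          ext t
          simp only [mem_preimage, mem_inter_iff, pt_mem_ball h _ _ hr, mem_ofPred_eq, mem_Ioo]
          apply and_congr_right
          intro _
          have : (t - c) ^ 2 + (y - p.2) ^ 2 < r ^ 2 ↔ (t - c) ^ 2 < l ^ 2 := by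
            rw [hl2]; constructor <;> intro h <;> linarith
          rw [this, sq_lt_sq, abs_of_pos hl0, abs_lt]
          constructor <;> rintro ⟨h1, h2⟩ <;> constructor <;> linarith
        have e1 := hsl (p.1 + τ)
        have e2 := hsl p.1
        rw [e1, show pt a b p = pt a b (p.1, p.2) from rfl, e2]
        by_cases hyZ : y ∈ Z
        · rw [indicator_of_mem (subset_toMeasurable _ _ hyZ)]
          calc _ ≤ volume (({t | pt a b (t, y) ∈ E} ∩ Ioo (p.1 - l) (p.1 + l)) ∪
                Ico (p.1 + l) (p.1 + l + τ)) := by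
                apply measure_mono
                rintro t ⟨ht, h1, h2⟩
                by_cases htl : t < p.1 + l
                · exact Or.inl ⟨ht, by linarith, htl⟩
                · exact Or.inr ⟨not_lt.1 htl, by linarith⟩
            _ ≤ _ := by
                refine (measure_union_le _ _).trans ?_
                gcongr
                rw [Real.volume_Ico]; gcongr; linarith
        · refine le_add_right ?_
          have hmiss : ∀ u ∈ Ioo (p.1 - l) (p.1 + τ + l), pt a b (u, y) ∉ essBoundary E := by
            intro u hu hue
            apply hyZ
            refine ⟨u, hue, ?_⟩
            rw [pt_mem_ball h _ _ (by positivity)]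
            simp only
            have hlr : l ≤ r := by
              apply le_of_sq_le_sq _ hr.le
              rw [hl2]; nlinarith [sq_nonneg (y - p.2)]
            have : (u - p.1) ^ 2 < (l + τ) ^ 2 := by
              rw [sq_lt_sq, abs_of_pos (by positivity : 0 < l + τ), abs_lt]
              constructor <;> linarith [hu.1, hu.2]
            nlinarith [mul_nonneg hτ.le (sub_nonneg.2 hlr)]
          rcases hy _ _ hmiss with h4 | h4
          · calc _ ≤ volume (Ioo (p.1 + τ - l) (p.1 + τ + l)) := measure_mono inter_subset_right
              _ = volume (Ioo (p.1 - l) (p.1 + l)) := by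
                  rw [Real.volume_Ioo, Real.volume_Ioo]; congr 1; ring
              _ ≤ _ := by
                  apply measure_mono_ae
                  filter_upwards [h4] with u hu hI
                  exact ⟨hu ⟨hI.1, by linarith [hI.2]⟩, hI⟩
          · calc _ ≤ volume (∅ : Set ℝ) := by
                  apply measure_mono_ae
                  filter_upwards [h4] with u hu hI
                  exact hu ⟨by linarith [hI.2.1], hI.2.2⟩ hI.1
              _ ≤ _ := by simp
    _ = (∫⁻ y : ℝ, volume ((fun t : ℝ => (t, y)) ⁻¹' (pt a b ⁻¹' (E ∩ ball (pt a b p) r)))) +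
        ENNReal.ofReal τ * volume Z := by
        rw [lintegral_add_right _ (measurable_const.indicator (measurableSet_toMeasurable _ _)),
          lintegral_indicator (measurableSet_toMeasurable _ _), setLIntegral_const,
          measure_toMeasurable]
    _ ≤ _ := by gcongr

lemma ball_shift {E : Set (En 2)} (hE : MeasurableSet E) (x x' : En 2) {r : ℝ} (hr : 0 < r) :
    volume (E ∩ ball x' r) ≤ volume (E ∩ ball x r) +
      ENNReal.ofReal (dist x x') * μH[1] (essBoundary E ∩ ball x (r + dist x x')) := by
  rcases eq_or_ne x x' with rfl | hne
  · simp
  set τ := dist x x' with hτdef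
  have hτ : 0 < τ := dist_pos.2 hne
  have hsq := dist_sq_coord x x'
  rw [← hτdef] at hsq
  set a := (x' 0 - x 0) / τ with ha
  set b := (x' 1 - x 1) / τ with hb
  have hab : a ^ 2 + b ^ 2 = 1 := by
    rw [ha, hb]; field_simp; linarith
  have hx := pt_surj hab x
  have hx' : pt a b (a * x 0 + b * x 1 + τ, a * x 1 - b * x 0) = x' := by
    have h1 : a * τ = x' 0 - x 0 := by rw [ha]; field_simp
    have h2 : b * τ = x' 1 - x 1 := by rw [hb]; field_simp
    ext i
    fin_cases i
    · simp [pt]; linear_combination (x 0) * hab + h1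
    · simp [pt]; linear_combination (x 1) * hab + h2
  have := ball_shift_pt hE hab (a * x 0 + b * x 1, a * x 1 - b * x 0) hr hτ
  simp only [hx, hx'] at this
  exact this

/-! ### Mollification -/

/-- The measure of the part of `E` in the ball `B_r(x)`, as a real number. -/
def vol (E : Set (En 2)) (r : ℝ) (x : En 2) : ℝ := (volume (E ∩ ball x r)).toReal

/-- The mollification of `vol E r` at scale `s`. -/
def moll (E : Set (En 2)) (r s : ℝ) (hs : 0 < s) (x : En 2) : ℝ :=
  (convolution ((⟨s / 2, s, half_pos hs, half_lt_self hs⟩ : ContDiffBump (0 : En 2)).normed volume)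
    (vol E r) (ContinuousLinearMap.lsmul ℝ ℝ) volume) x

lemma vol_fin (E : Set (En 2)) (r : ℝ) (x : En 2) : volume (E ∩ ball x r) ≠ ⊤ :=
  measure_ne_top_of_subset inter_subset_right (vball_top x r)

lemma vol_nonneg (E : Set (En 2)) (r : ℝ) (x : En 2) : 0 ≤ vol E r x := ENNReal.toReal_nonneg

lemma vol_le (E : Set (En 2)) {r : ℝ} (hr : 0 ≤ r) (x : En 2) : vol E r x ≤ Real.pi * r ^ 2 := by
  rw [vol]
  apply ENNReal.toReal_le_of_le_ofReal (by positivity)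
  rw [← vball x hr]
  exact measure_mono inter_subset_right

lemma vol_measurable {E : Set (En 2)} (hE : MeasurableSet E) (r : ℝ) : Measurable (vol E r) := by
  have ho : IsOpen {q : En 2 × En 2 | dist q.2 q.1 < r} :=
    isOpen_lt (by fun_prop) continuous_const
  have hm : MeasurableSet ((Prod.snd ⁻¹' E) ∩ {q : En 2 × En 2 | dist q.2 q.1 < r}) :=
    (measurable_snd hE).inter ho.measurableSet
  have h : Measurable fun x : En 2 => (volume : Measure (En 2)) (E ∩ ball x r) :=
    measurable_measure_prodMk_left (ν := (volume : Measure (En 2))) hm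
  exact h.ennreal_toReal

lemma vol_locInt {E : Set (En 2)} (hE : MeasurableSet E) {r : ℝ} (hr : 0 ≤ r) :
    LocallyIntegrable (vol E r) volume := by
  have h1 : LocallyIntegrable (fun _ : En 2 => Real.pi * r ^ 2) volume :=
    locallyIntegrable_const _
  refine h1.mono (vol_measurable hE r).aestronglyMeasurable (ae_of_all _ fun x => ?_)
  rw [Real.norm_of_nonneg (vol_nonneg _ _ _), Real.norm_of_nonneg (by positivity)]
  exact vol_le E hr x

lemma moll_contDiff {E : Set (En 2)} (hE : MeasurableSet E) {r s : ℝ} (hr : 0 ≤ r) (hs : 0 < s) :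
    ContDiff ℝ 1 (moll E r s hs) :=
  (ContDiffBump.hasCompactSupport_normed _).contDiff_convolution_left _
    (ContDiffBump.contDiff_normed _) (vol_locInt hE hr)

lemma moll_dist {E : Set (En 2)} (hE : MeasurableSet E) {r s : ℝ} (hs : 0 < s)
    (x : En 2) {z ε : ℝ} (h : ∀ y ∈ ball x s, dist (vol E r y) z ≤ ε) :
    dist (moll E r s hs x) z ≤ ε := by
  have hε : 0 ≤ ε := dist_nonneg.trans (h x (mem_ball_self hs))
  exact dist_convolution_le hε (ContDiffBump.support_normed_eq _).subset
    (ContDiffBump.nonneg_normed _) (ContDiffBump.integral_normed _)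
    (vol_measurable hE r).aestronglyMeasurable h

lemma moll_bounds {E : Set (En 2)} (hE : MeasurableSet E) {r s : ℝ} (hs : 0 < s)
    (x : En 2) {m M : ℝ} (h : ∀ y ∈ ball x s, m ≤ vol E r y ∧ vol E r y ≤ M) :
    m ≤ moll E r s hs x ∧ moll E r s hs x ≤ M := by
  have := moll_dist hE hs x (z := (m + M) / 2) (ε := (M - m) / 2) (r := r) (by
    intro y hy
    obtain ⟨h1, h2⟩ := h y hy
    rw [Real.dist_eq, abs_le]; constructor <;> linarith)
  rw [Real.dist_eq, abs_le] at this
  constructor <;> linarith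

lemma vol_diff {E : Set (En 2)} (hE : MeasurableSet E) {x x' c : En 2} {r R : ℝ} (hr : 0 < r)
    (hfin : μH[1] (essBoundary E ∩ ball c R) ≠ ⊤)
    (hx : dist x c + (r + dist x x') ≤ R) :
    vol E r x' - vol E r x ≤ dist x x' * (μH[1] (essBoundary E ∩ ball c R)).toReal := by
  have h1 := ball_shift hE x x' hr
  have h2 : μH[1] (essBoundary E ∩ ball x (r + dist x x')) ≤ μH[1] (essBoundary E ∩ ball c R) := by
    apply measure_mono
    apply inter_subset_inter_right
    apply ball_subset_ball'
    linarith
  have h3 : volume (E ∩ ball x' r) ≤ volume (E ∩ ball x r) +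
      ENNReal.ofReal (dist x x') * μH[1] (essBoundary E ∩ ball c R) :=
    h1.trans (by gcongr)
  have h4 := ENNReal.toReal_mono
    (ENNReal.add_ne_top.2 ⟨vol_fin E r x, ENNReal.mul_ne_top ENNReal.ofReal_ne_top hfin⟩) h3
  rw [ENNReal.toReal_add (vol_fin E r x) (ENNReal.mul_ne_top ENNReal.ofReal_ne_top hfin),
    ENNReal.toReal_mul, ENNReal.toReal_ofReal dist_nonneg] at h4
  rw [vol, vol]; linarith

/-- The gradient of the mollification is bounded by the length of the nearby essential boundary,
by `ball_shift`. -/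
lemma moll_fderiv {E : Set (En 2)} (hE : MeasurableSet E) {r s : ℝ} (hr : 0 < r) (hs : 0 < s)
    (x : En 2) (hfin : μH[1] (essBoundary E ∩ ball x (r + 2 * s)) ≠ ⊤) :
    ‖fderiv ℝ (moll E r s hs) x‖ ≤ (μH[1] (essBoundary E ∩ ball x (r + 2 * s))).toReal := by
  have hd : DifferentiableAt ℝ (moll E r s hs) x :=
    (moll_contDiff hE hr.le hs).differentiable (by simp) x
  refine hd.hasFDerivAt.le_of_lip' ENNReal.toReal_nonneg ?_
  filter_upwards [ball_mem_nhds x (half_pos hs)] with x' hx'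
  rw [mem_ball] at hx'
  set m := (μH[1] (essBoundary E ∩ ball x (r + 2 * s))).toReal
  set φ := ((⟨s / 2, s, half_pos hs, half_lt_self hs⟩ : ContDiffBump (0 : En 2)).normed volume)
    with hφ
  have hex : ∀ y, Integrable (fun t => φ t • vol E r (y - t)) volume := fun y =>
    (ContDiffBump.hasCompactSupport_normed _).convolutionExists_left
      (ContinuousLinearMap.lsmul ℝ ℝ) (ContDiffBump.continuous_normed _)
      (vol_locInt hE hr.le) y
  have hintg : moll E r s hs x' - moll E r s hs x =
      ∫ t, (φ t • vol E r (x' - t) - φ t • vol E r (x - t)) := by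
    rw [integral_sub (hex x') (hex x)]
    rfl
  have hφint : Integrable φ volume := ContDiffBump.integrable_normed _
  rw [hintg]
  calc ‖∫ t, (φ t • vol E r (x' - t) - φ t • vol E r (x - t))‖
      ≤ ∫ t, φ t * (m * ‖x' - x‖) := by
        apply norm_integral_le_of_norm_le (hφint.mul_const _)
        refine ae_of_all _ fun t => ?_
        have hφ0 : 0 ≤ φ t := ContDiffBump.nonneg_normed _ t
        rw [← smul_sub, norm_smul, Real.norm_of_nonneg hφ0]
        by_cases ht : t ∈ ball (0 : En 2) s
        · rw [mem_ball_zero_iff] at ht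
          apply mul_le_mul_of_nonneg_left _ hφ0
          have d0 : dist (x - t) (x' - t) = ‖x' - x‖ := by
            rw [dist_sub_right, dist_comm, dist_eq_norm]
          have d0' : dist (x' - t) (x - t) = ‖x' - x‖ := by rw [dist_comm, d0]
          have d1 : dist (x - t) x = ‖t‖ := by simp
          rw [dist_eq_norm] at hx'
          have d2 : dist (x' - t) x ≤ ‖x' - x‖ + ‖t‖ := by
            rw [dist_eq_norm, show x' - t - x = (x' - x) - t by abel]; exact norm_sub_le _ _
          have e1 := vol_diff hE (x := x - t) (x' := x' - t) hr hfin (by rw [d0, d1]; linarith)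
          have e2 := vol_diff hE (x := x' - t) (x' := x - t) hr hfin (by rw [d0']; linarith)
          rw [d0] at e1
          rw [d0'] at e2
          rw [Real.norm_eq_abs, abs_le]
          constructor <;> linarith [mul_comm m ‖x' - x‖]
        · have : φ t = 0 := by
            have hsup : Function.support φ = ball 0 s := ContDiffBump.support_normed_eq _
            rw [← hsup] at ht
            simpa using ht
          rw [this]; simp
    _ = m * ‖x' - x‖ := by
        rw [integral_mul_const, ContDiffBump.integral_normed, one_mul]

/-- The square `(δ, 1 - δ)²`. -/
def innerSq (δ : ℝ) : Set (En 2) := {p | p 0 ∈ Ioo δ (1 - δ) ∧ p 1 ∈ Ioo δ (1 - δ)}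

lemma innerSq_measurable (δ : ℝ) : MeasurableSet (innerSq δ) := by
  apply MeasurableSet.inter
  · exact (isOpen_Ioo.preimage (by fun_prop : Continuous fun p : En 2 => p 0)).measurableSet
  · exact (isOpen_Ioo.preimage (by fun_prop : Continuous fun p : En 2 => p 1)).measurableSet

lemma coord_le_dist (x z : En 2) (i : Fin 2) : |x i - z i| ≤ dist x z := by
  have := dist_sq_coord x z
  apply abs_le_of_sq_le_sq _ dist_nonneg
  have h0 := sq_nonneg (x 0 - z 0)
  have h1 := sq_nonneg (x 1 - z 1)
  rw [this]
  revert i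
  rw [Fin.forall_fin_two]
  constructor <;> linarith

lemma ball_sub_unitSq {δ : ℝ} {x : En 2} (hx : x ∈ innerSq δ) : ball x δ ⊆ unitSq := by
  intro z hz
  rw [mem_ball] at hz
  have h0 := abs_le.1 ((coord_le_dist z x 0).trans hz.le)
  have h1 := abs_le.1 ((coord_le_dist z x 1).trans hz.le)
  have g0 := abs_lt.1 ((coord_le_dist z x 0).trans_lt hz)
  have g1 := abs_lt.1 ((coord_le_dist z x 1).trans_lt hz)
  exact ⟨⟨by linarith [hx.1.1], by linarith [hx.1.2]⟩, ⟨by linarith [hx.2.1], by linarith [hx.2.2]⟩⟩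

/-- By Fubini, each point of the essential boundary contributes to the gradients only in a disc of
radius `r + 2 s`. -/
lemma moll_integral {E : Set (En 2)} (hE : MeasurableSet E)
    (hP : μH[1] (essBoundary E ∩ unitSq) ≠ ⊤) {r s : ℝ} (hr : 0 < r) (hs : 0 < s) :
    ∫⁻ x in innerSq (r + 2 * s), ‖fderiv ℝ (moll E r s hs) x‖ₑ ≤
      ENNReal.ofReal (Real.pi * (r + 2 * s) ^ 2) * μH[1] (essBoundary E ∩ unitSq) := by
  set δ := r + 2 * s with hδ
  have hδ0 : 0 < δ := by positivity
  set ν : Measure (En 2) := (μH[1] : Measure (En 2)).restrict (essBoundary E ∩ unitSq) with hν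
  have hνu : ν univ = μH[1] (essBoundary E ∩ unitSq) := by rw [hν, Measure.restrict_apply_univ]
  have : IsFiniteMeasure ν := ⟨by rw [hνu]; exact hP.lt_top⟩
  calc ∫⁻ x in innerSq δ, ‖fderiv ℝ (moll E r s hs) x‖ₑ
      ≤ ∫⁻ x in innerSq δ, ν (ball x δ) := by
        apply setLIntegral_mono' (innerSq_measurable δ)
        intro x hx
        have hsub := ball_sub_unitSq hx
        have hle : essBoundary E ∩ ball x δ ⊆ ball x δ ∩ (essBoundary E ∩ unitSq) :=
          fun z hz => ⟨hz.2, hz.1, hsub hz.2⟩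
        have hfin : μH[1] (essBoundary E ∩ ball x δ) ≠ ⊤ :=
          measure_ne_top_of_subset (fun z hz => (hle hz).2) hP
        have h1 := moll_fderiv hE hr hs x hfin
        rw [hν, Measure.restrict_apply measurableSet_ball]
        refine le_trans ?_ (measure_mono hle)
        rw [← ofReal_norm]
        exact ENNReal.ofReal_le_of_le_toReal h1
    _ ≤ ∫⁻ x, ν (ball x δ) := setLIntegral_le_lintegral _ _
    _ = ∫⁻ y, volume (ball y δ) ∂ν := by
        have hm : MeasurableSet {q : En 2 × En 2 | dist q.2 q.1 < δ} :=
          (isOpen_lt (by fun_prop) continuous_const).measurableSet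
        have h1 := Measure.prod_apply (μ := (volume : Measure (En 2))) (ν := ν) hm
        have h2 := Measure.prod_apply_symm (μ := (volume : Measure (En 2))) (ν := ν) hm
        rw [h1] at h2
        have h3 : ∀ y : En 2, ((fun x : En 2 => (x, y)) ⁻¹' {q : En 2 × En 2 | dist q.2 q.1 < δ}) =
            ball y δ := by
          intro y; ext x; simp [dist_comm]
        simp only [h3] at h2
        exact h2
    _ = _ := by
        simp only [vball _ hδ0.le]
        rw [lintegral_const, hνu]

/-- Smooth approximations of the indicator of `E` whose gradients have total mass asymptotically
at most the relative perimeter of `E` in the unit square. -/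
lemma exists_approx {E : Set (En 2)} (hE : MeasurableSet E)
    (hP : μH[1] (essBoundary E ∩ unitSq) ≠ ⊤) :
    ∃ (δ : ℕ → ℝ) (f : ℕ → En 2 → ℝ) (c : ℕ → ℝ≥0∞), Tendsto δ atTop (𝓝 0) ∧
      (∀ n, ContDiff ℝ 1 (f n)) ∧
      (∀ᵐ x : En 2, Tendsto (fun n => f n x) atTop (𝓝 (E.indicator (fun _ => (1 : ℝ)) x))) ∧
      Tendsto c atTop (𝓝 (μH[1] (essBoundary E ∩ unitSq))) ∧
      ∀ n, ∫⁻ x in innerSq (δ n), ‖fderiv ℝ (f n) x‖ₑ ≤ c n := by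
  set r : ℕ → ℝ := fun n => 1 / ((n : ℝ) + 1) with hrdef
  set ε : ℕ → ℝ := fun n => 1 / 2 * (1 / ((n : ℝ) + 1)) with hεdef
  have hr : ∀ n, 0 < r n := fun n => by positivity
  have hε : ∀ n, 0 < ε n := fun n => by positivity
  have hr0 : Tendsto r atTop (𝓝 0) := tendsto_one_div_add_atTop_nhds_zero_nat
  have hε0 : Tendsto ε atTop (𝓝 0) := by
    have := hr0.const_mul (1 / 2 : ℝ)
    rwa [mul_zero] at this
  have hε1 : ∀ n, ε n < 1 := by
    intro n
    have : 1 / ((n : ℝ) + 1) ≤ 1 := by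
      rw [div_le_one (by positivity)]; linarith [Nat.cast_nonneg (α := ℝ) n]
    simp only [hεdef]; linarith
  have hs : ∀ n, 0 < r n * ε n := fun n => mul_pos (hr n) (hε n)
  have hmeq : ∀ (t : ℕ → ℝ) (x : En 2) (n : ℕ), 0 < t n →
      vol E (t n) x / (Real.pi * r n ^ 2) = (ratio E x (t n)).toReal * (t n / r n) ^ 2 := by
    intro t x n ht
    rw [ratio, ENNReal.toReal_div, vball x ht.le, ENNReal.toReal_ofReal (by positivity), vol]
    have := (hr n).ne'
    have := ht.ne'
    field_simp
  have hrat : ∀ (x : En 2) (l : ℝ≥0∞), l ≠ ⊤ → Tendsto (ratio E x) (𝓝[>] 0) (𝓝 l) →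
      ∀ σ : ℝ, |σ| ≤ 1 → Tendsto (fun n => vol E (r n * (1 + σ * ε n)) x / (Real.pi * r n ^ 2))
        atTop (𝓝 l.toReal) := by
    intro x l hl hx σ hσ
    have hpos : ∀ n, 0 < 1 + σ * ε n := by
      intro n; nlinarith [hε n, hε1 n, abs_le.1 hσ]
    have hlim1 : Tendsto (fun n => 1 + σ * ε n) atTop (𝓝 1) := by
      simpa using (hε0.const_mul σ).const_add 1
    have ht : Tendsto (fun n => r n * (1 + σ * ε n)) atTop (𝓝[>] 0) := by
      apply tendsto_nhdsWithin_of_tendsto_nhds_of_eventually_within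
      · simpa using hr0.mul hlim1
      · exact Eventually.of_forall fun n => mul_pos (hr n) (hpos n)
    have h1 := (ENNReal.tendsto_toReal hl).comp (hx.comp ht)
    have h2 := h1.mul (hlim1.pow 2)
    rw [one_pow, mul_one] at h2
    refine h2.congr fun n => ?_
    rw [hmeq (fun n => r n * (1 + σ * ε n)) x n (mul_pos (hr n) (hpos n))]
    simp only [Function.comp]
    rw [mul_div_cancel_left₀ _ (hr n).ne']
  refine ⟨fun n => r n + 2 * (r n * ε n),
    fun n x => (1 / (Real.pi * r n ^ 2)) * moll E (r n) (r n * ε n) (hs n) x,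
    fun n => ENNReal.ofReal ((1 + 2 * ε n) ^ 2) * μH[1] (essBoundary E ∩ unitSq), ?_, ?_, ?_, ?_, ?_⟩
  · simpa using hr0.add ((hr0.mul hε0).const_mul 2)
  · intro n
    exact contDiff_const.mul (moll_contDiff hE (hr n).le (hs n))
  · have hlow : ∀ n x, vol E (r n * (1 + (-1) * ε n)) x / (Real.pi * r n ^ 2) ≤
        (1 / (Real.pi * r n ^ 2)) * moll E (r n) (r n * ε n) (hs n) x ∧
        (1 / (Real.pi * r n ^ 2)) * moll E (r n) (r n * ε n) (hs n) x ≤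
        vol E (r n * (1 + 1 * ε n)) x / (Real.pi * r n ^ 2) := by
      intro n x
      have := moll_bounds hE (hs n) x (r := r n) (m := vol E (r n * (1 + (-1) * ε n)) x)
        (M := vol E (r n * (1 + 1 * ε n)) x) (by
          intro y hy
          rw [mem_ball] at hy
          constructor
          · apply ENNReal.toReal_mono (vol_fin _ _ _)
            apply measure_mono
            apply inter_subset_inter_right
            apply ball_subset_ball'
            rw [dist_comm]; linarith
          · apply ENNReal.toReal_mono (vol_fin _ _ _)
            apply measure_mono
            apply inter_subset_inter_right
            apply ball_subset_ball'
            linarith)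
      have hp : 0 < Real.pi * r n ^ 2 := by have := hr n; positivity
      simp only [div_eq_inv_mul, mul_one]
      constructor
      · exact mul_le_mul_of_nonneg_left this.1 (by positivity)
      · exact mul_le_mul_of_nonneg_left this.2 (by positivity)
    filter_upwards [ae_density hE] with x hx
    have hlim : ∃ l : ℝ≥0∞, l ≠ ⊤ ∧ Tendsto (ratio E x) (𝓝[>] 0) (𝓝 l) ∧
        l.toReal = E.indicator (fun _ => (1 : ℝ)) x := by
      by_cases hxE : x ∈ E
      · exact ⟨1, by simp, hx.1 hxE, by simp [hxE]⟩
      · exact ⟨0, by simp, hx.2 hxE, by simp [hxE]⟩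
    obtain ⟨l, hl, hl1, hl2⟩ := hlim
    rw [← hl2]
    exact tendsto_of_tendsto_of_tendsto_of_le_of_le (hrat x l hl hl1 (-1) (by simp))
      (hrat x l hl hl1 1 (by simp)) (fun n => (hlow n x).1) (fun n => (hlow n x).2)
  · have h1 : Tendsto (fun n => ENNReal.ofReal ((1 + 2 * ε n) ^ 2)) atTop (𝓝 (ENNReal.ofReal 1)) := by
      apply ENNReal.tendsto_ofReal
      simpa using ((hε0.const_mul 2).const_add 1).pow 2
    have := ENNReal.Tendsto.mul_const (b := μH[1] (essBoundary E ∩ unitSq)) h1 (Or.inr hP)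
    simpa using this
  · intro n
    have hp : 0 < Real.pi * r n ^ 2 := by have := hr n; positivity
    have hfd : ∀ x, ‖fderiv ℝ (fun x => (1 / (Real.pi * r n ^ 2)) *
        moll E (r n) (r n * ε n) (hs n) x) x‖ₑ =
        ENNReal.ofReal (1 / (Real.pi * r n ^ 2)) *
          ‖fderiv ℝ (moll E (r n) (r n * ε n) (hs n)) x‖ₑ := by
      intro x
      have hd : DifferentiableAt ℝ (moll E (r n) (r n * ε n) (hs n)) x :=
        (moll_contDiff hE (hr n).le (hs n)).differentiable (by simp) x
      rw [fderiv_const_mul hd, enorm_smul, Real.enorm_of_nonneg (by positivity)]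
    simp only [hfd]
    rw [lintegral_const_mul' _ _ ENNReal.ofReal_ne_top]
    calc _ ≤ ENNReal.ofReal (1 / (Real.pi * r n ^ 2)) *
          (ENNReal.ofReal (Real.pi * (r n + 2 * (r n * ε n)) ^ 2) *
            μH[1] (essBoundary E ∩ unitSq)) := by
          gcongr
          exact moll_integral hE hP (hr n) (hs n)
      _ = _ := by
          rw [← mul_assoc, ← ENNReal.ofReal_mul (by positivity)]
          congr 2
          have := (hr n).ne'
          field_simp

/-! ### The slicing inequality -/

lemma liminf_superadd (u v : ℕ → ℝ≥0∞) :
    liminf u atTop + liminf v atTop ≤ liminf (fun n => u n + v n) atTop := by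
  rw [liminf_eq_iSup_iInf_of_nat, liminf_eq_iSup_iInf_of_nat, liminf_eq_iSup_iInf_of_nat,
    ENNReal.iSup_add_iSup_of_monotone]
  · refine iSup_mono fun n => le_iInf₂ fun i hi => ?_
    exact add_le_add (iInf₂_le i hi) (iInf₂_le i hi)
  · intro a b hab
    exact le_iInf₂ fun i hi => iInf₂_le i (hab.trans hi)
  · intro a b hab
    exact le_iInf₂ fun i hi => iInf₂_le i (hab.trans hi)

/-- If smooth functions jump by one in the limit between `p` and `p'`, their weighted variations
over `A ⊇ (p, p']` are asymptotically at least any lower bound of the weight on `(p, p']`. -/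
lemma jump_le {φ φ' : ℕ → ℝ → ℝ} {δ : ℕ → ℝ} {g : ℝ → ℝ} {A : Set ℝ} {p p' c l l' : ℝ}
    (hφ : ∀ n x, HasDerivAt (φ n) (φ' n x) x) (hφ' : ∀ n, Continuous (φ' n))
    (hδ : Tendsto δ atTop (𝓝 0)) (hp : 0 < p) (hpp : p ≤ p') (hp' : p' < 1)
    (hA : Ioc p p' ⊆ A) (hg : ∀ x ∈ Ioc p p', c ≤ g x)
    (hl : Tendsto (fun n => φ n p) atTop (𝓝 l)) (hl' : Tendsto (fun n => φ n p') atTop (𝓝 l'))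
    (hll : |l' - l| = 1) :
    ENNReal.ofReal c ≤
      liminf (fun n => ∫⁻ x in Ioo (δ n) (1 - δ n) ∩ A, ENNReal.ofReal (g x) * ‖φ' n x‖ₑ) atTop := by
  have h1 : Tendsto (fun n => ENNReal.ofReal c * ‖φ n p' - φ n p‖ₑ) atTop
      (𝓝 (ENNReal.ofReal c * ‖l' - l‖ₑ)) :=
    ENNReal.Tendsto.const_mul ((hl'.sub hl).enorm) (Or.inr ENNReal.ofReal_ne_top)
  have h2 : ENNReal.ofReal c * ‖l' - l‖ₑ = ENNReal.ofReal c := by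
    rw [← ofReal_norm, Real.norm_eq_abs, hll, ENNReal.ofReal_one, mul_one]
  rw [h2] at h1
  rw [← h1.liminf_eq]
  refine liminf_le_liminf ?_
  have e1 : ∀ᶠ n in atTop, δ n < p := hδ.eventually (gt_mem_nhds hp)
  have e2 : ∀ᶠ n in atTop, δ n < 1 - p' := hδ.eventually (gt_mem_nhds (by linarith))
  filter_upwards [e1, e2] with n hn1 hn2
  have hftc : ∫ x in p..p', φ' n x = φ n p' - φ n p :=
    intervalIntegral.integral_eq_sub_of_hasDerivAt (fun x _ => hφ n x)
      ((hφ' n).intervalIntegrable _ _)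
  rw [← hftc, intervalIntegral.integral_of_le hpp]
  calc ENNReal.ofReal c * ‖∫ x in Ioc p p', φ' n x‖ₑ
      ≤ ENNReal.ofReal c * ∫⁻ x in Ioc p p', ‖φ' n x‖ₑ := by
        gcongr; exact enorm_integral_le_lintegral_enorm _
    _ = ∫⁻ x in Ioc p p', ENNReal.ofReal c * ‖φ' n x‖ₑ :=
        (lintegral_const_mul' _ _ ENNReal.ofReal_ne_top).symm
    _ ≤ ∫⁻ x in Ioc p p', ENNReal.ofReal (g x) * ‖φ' n x‖ₑ := by
        apply setLIntegral_mono' measurableSet_Ioc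
        intro x hx
        gcongr
        exact hg x hx
    _ ≤ _ := by
        apply lintegral_mono_set
        intro x hx
        exact ⟨⟨by linarith [hx.1], by linarith [hx.2]⟩, hA hx⟩

/-- The set `E` in Cartesian coordinates. -/
def plane (E : Set (En 2)) : Set (ℝ × ℝ) := pt 1 0 ⁻¹' E

lemma plane_measurable {E : Set (En 2)} (hE : MeasurableSet E) : MeasurableSet (plane E) :=
  (pt_continuous 1 0).measurable hE

lemma pt10 (p : ℝ × ℝ) : pt 1 0 p = p.1 • (!₂[1, 0] : En 2) + p.2 • (!₂[0, 1] : En 2) := by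
  ext i; fin_cases i <;> simp [pt]

/-- Smooth approximations in Cartesian coordinates, given with their partial derivatives. -/
lemma exists_approx_plane {E : Set (En 2)} (hE : MeasurableSet E)
    (hP : μH[1] (essBoundary E ∩ unitSq) ≠ ⊤) :
    ∃ (δ : ℕ → ℝ) (F F₁ F₂ : ℕ → ℝ × ℝ → ℝ) (N : ℕ → ℝ × ℝ → ℝ) (c : ℕ → ℝ≥0∞),
      Tendsto δ atTop (𝓝 0) ∧
      (∀ n x y, HasDerivAt (fun t => F n (t, y)) (F₁ n (x, y)) x) ∧
      (∀ n x y, HasDerivAt (fun t => F n (x, t)) (F₂ n (x, y)) y) ∧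
      (∀ n, Continuous (F₁ n)) ∧ (∀ n, Continuous (F₂ n)) ∧
      (∀ᵐ p : ℝ × ℝ, Tendsto (fun n => F n p) atTop
        (𝓝 ((plane E).indicator (fun _ => (1 : ℝ)) p))) ∧
      Tendsto c atTop (𝓝 (μH[1] (essBoundary E ∩ unitSq))) ∧
      (∀ n p (a b : ℝ), 0 ≤ a → 0 ≤ b → a ^ 2 + b ^ 2 ≤ 1 → a * |F₁ n p| + b * |F₂ n p| ≤ N n p) ∧
      ∀ n, ∫⁻ p in Ioo (δ n) (1 - δ n) ×ˢ Ioo (δ n) (1 - δ n), ENNReal.ofReal (N n p) ≤ c n := by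
  obtain ⟨δ, f, c, hδ, hf, hlim, hc, hintg⟩ := exists_approx hE hP
  have hdiff : ∀ n x, HasFDerivAt (f n) (fderiv ℝ (f n) x) x := fun n x =>
    ((hf n).differentiable (by simp) x).hasFDerivAt
  have hcont : ∀ n, Continuous (fderiv ℝ (f n)) := fun n => (hf n).continuous_fderiv (by simp)
  refine ⟨δ, fun n p => f n (pt 1 0 p), fun n p => fderiv ℝ (f n) (pt 1 0 p) !₂[1, 0],
    fun n p => fderiv ℝ (f n) (pt 1 0 p) !₂[0, 1], fun n p => ‖fderiv ℝ (f n) (pt 1 0 p)‖, c,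
    hδ, ?_, ?_, ?_, ?_, ?_, hc, ?_, ?_⟩
  · intro n x y
    have h1 : HasDerivAt (fun t : ℝ => pt 1 0 (t, y)) (!₂[1, 0] : En 2) x := by
      simp only [pt10]
      simpa using ((hasDerivAt_id x).smul_const (!₂[1, 0] : En 2)).add_const (y • (!₂[0, 1] : En 2))
    exact (hdiff n _).comp_hasDerivAt x h1
  · intro n x y
    have h1 : HasDerivAt (fun t : ℝ => pt 1 0 (x, t)) (!₂[0, 1] : En 2) y := by
      simp only [pt10]
      simpa using ((hasDerivAt_id y).smul_const (!₂[0, 1] : En 2)).const_add (x • (!₂[1, 0] : En 2))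
    exact (hdiff n _).comp_hasDerivAt y h1
  · intro n
    exact ((hcont n).comp (pt_continuous 1 0)).clm_apply continuous_const
  · intro n
    exact ((hcont n).comp (pt_continuous 1 0)).clm_apply continuous_const
  · exact (pt_mp (a := 1) (b := 0) (by norm_num)).quasiMeasurePreserving.ae hlim
  · intro n p a b ha hb hab
    -- test the derivative on `(±a, ±b)`, with signs matching those of the partial derivatives
    set L := fderiv ℝ (f n) (pt 1 0 p)
    have key : ∀ s t : ℝ, |s| = 1 → |t| = 1 →
        (s * a) * L !₂[1, 0] + (t * b) * L !₂[0, 1] ≤ ‖L‖ := by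
      intro s t hs ht
      have h1 := L.le_opNorm (pt 1 0 (s * a, t * b))
      have h2 : ‖pt 1 0 (s * a, t * b)‖ ≤ 1 := by
        have h3 := pt_dist_sq (a := 1) (b := 0) (by norm_num) (s * a, t * b) (0, 0)
        have h4 : pt 1 0 (0, 0) = 0 := by rw [pt10]; simp
        rw [h4, dist_zero_right] at h3
        have hs2 : s ^ 2 = 1 := by rw [← sq_abs, hs]; norm_num
        have ht2 : t ^ 2 = 1 := by rw [← sq_abs, ht]; norm_num
        simp only [sub_zero, mul_pow, hs2, ht2, one_mul] at h3
        rw [← h3] at hab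
        nlinarith [norm_nonneg (pt 1 0 (s * a, t * b))]
      rw [pt10, map_add, map_smul, map_smul] at h1
      simp only [smul_eq_mul] at h1
      rw [← pt10 (s * a, t * b)] at h1
      refine (le_abs_self _).trans (h1.trans ?_)
      exact mul_le_of_le_one_right (norm_nonneg _) h2
    rcases abs_choice (L !₂[1, 0]) with h1 | h1 <;> rcases abs_choice (L !₂[0, 1]) with h2 | h2
    · have := key 1 1 (by simp) (by simp); rw [h1, h2]; linarith
    · have := key 1 (-1) (by simp) (by simp); rw [h1, h2]; linarith
    · have := key (-1) 1 (by simp) (by simp); rw [h1, h2]; linarith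
    · have := key (-1) (-1) (by simp) (by simp); rw [h1, h2]; linarith
  · intro n
    have h1 := (pt_mp (a := 1) (b := 0) (by norm_num)).setLIntegral_comp_preimage
      (innerSq_measurable (δ n)) (f := fun x => ‖fderiv ℝ (f n) x‖ₑ) (hcont n).measurable.enorm
    have h2 : pt 1 0 ⁻¹' innerSq (δ n) = Ioo (δ n) (1 - δ n) ×ˢ Ioo (δ n) (1 - δ n) := by
      ext p; simp [innerSq, pt]
    rw [h2] at h1
    simp only [ofReal_norm]
    rw [h1]
    exact hintg n

lemma lim_of_mem {S : Set (ℝ × ℝ)} {p q : ℝ × ℝ} (h : ¬ (p ∈ S ↔ q ∈ S)) :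
    |S.indicator (fun _ => (1 : ℝ)) q - S.indicator (fun _ => (1 : ℝ)) p| = 1 := by
  by_cases hp : p ∈ S <;> by_cases hq : q ∈ S <;> simp_all

/-- The slicing inequality. The weights `g, h` depend on the first coordinate only. `IL y` and
`IR y` bound the `g`-weighted variation of the indicator of `E` on the part of the row at height `y`
to the left and to the right of `x₀`, and `K x` bounds the variation along the column at `x`. -/
theorem slicing {E : Set (En 2)} (hE : MeasurableSet E)
    (hP : μH[1] (essBoundary E ∩ unitSq) ≠ ⊤) :
    ∃ C : Set (ℝ × ℝ), (∀ᵐ p : ℝ × ℝ, p ∈ C) ∧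
      ∀ (g h : ℝ → ℝ), Measurable g → Measurable h → (∀ x, 0 ≤ g x) → (∀ x, 0 ≤ h x) →
      (∀ x, g x ^ 2 + h x ^ 2 ≤ 1) → ∀ x₀ : ℝ, ∃ IL IR K : ℝ → ℝ≥0∞,
        Measurable IL ∧ Measurable IR ∧
        (∫⁻ x in Ioo 0 1, ENNReal.ofReal (h x) * K x) + ∫⁻ y in Ioo 0 1, (IL y + IR y) ≤
          μH[1] (essBoundary E ∩ unitSq) ∧
        (∀ p p' y c, y ∈ Ioo (0 : ℝ) 1 → 0 < p → p ≤ p' → p' < 1 → p' ≤ x₀ →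
          (p, y) ∈ C → (p', y) ∈ C → ¬ ((p, y) ∈ plane E ↔ (p', y) ∈ plane E) →
          (∀ x ∈ Ioc p p', c ≤ g x) → ENNReal.ofReal c ≤ IL y) ∧
        (∀ p p' y c, y ∈ Ioo (0 : ℝ) 1 → 0 < p → p ≤ p' → p' < 1 → x₀ ≤ p →
          (p, y) ∈ C → (p', y) ∈ C → ¬ ((p, y) ∈ plane E ↔ (p', y) ∈ plane E) →
          (∀ x ∈ Ioc p p', c ≤ g x) → ENNReal.ofReal c ≤ IR y) ∧
        (∀ p p' x, x ∈ Ioo (0 : ℝ) 1 → 0 < p → p ≤ p' → p' < 1 →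
          (x, p) ∈ C → (x, p') ∈ C → ¬ ((x, p) ∈ plane E ↔ (x, p') ∈ plane E) → 1 ≤ K x) := by
  obtain ⟨δ, F, F₁, F₂, N, c, hδ, hF₁, hF₂, hc₁, hc₂, hlim, hc, hN, hintg⟩ :=
    exists_approx_plane hE hP
  refine ⟨_, hlim, fun g h hg hh hg0 hh0 hgh x₀ => ?_⟩
  set I : ℕ → Set ℝ := fun n => Ioo (δ n) (1 - δ n) with hI
  have hIm : ∀ n, MeasurableSet (I n) := fun n => measurableSet_Ioo
  set G : ℕ → ℝ × ℝ → ℝ≥0∞ := fun n p => ENNReal.ofReal (g p.1) * ‖F₁ n p‖ₑ with hG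
  have hGm : ∀ n, Measurable (G n) := fun n =>
    (hg.comp measurable_fst).ennreal_ofReal.mul (hc₁ n).measurable.enorm
  have hVm : ∀ n, Measurable fun p => ‖F₂ n p‖ₑ := fun n => (hc₂ n).measurable.enorm
  set RL : ℕ → ℝ → ℝ≥0∞ := fun n y => ∫⁻ x in I n ∩ Iic x₀, G n (x, y) with hRL
  set RR : ℕ → ℝ → ℝ≥0∞ := fun n y => ∫⁻ x in I n ∩ Ioi x₀, G n (x, y) with hRR
  set V : ℕ → ℝ → ℝ≥0∞ := fun n x => ∫⁻ y in I n ∩ univ, ENNReal.ofReal 1 * ‖F₂ n (x, y)‖ₑ with hV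
  have hRLm : ∀ n, Measurable (RL n) := fun n => (hGm n).lintegral_prod_left'
  have hRRm : ∀ n, Measurable (RR n) := fun n => (hGm n).lintegral_prod_left'
  have hVm' : ∀ n, Measurable (V n) := fun n => ((hVm n).const_mul _).lintegral_prod_right'
  have hind : ∀ (U : ℕ → ℝ → ℝ≥0∞) (y : ℝ), y ∈ Ioo (0 : ℝ) 1 →
      liminf (fun n => (I n).indicator (U n) y) atTop = liminf (fun n => U n y) atTop := by
    intro U y hy
    apply liminf_congr
    have e1 : ∀ᶠ n in atTop, δ n < y := hδ.eventually (gt_mem_nhds hy.1)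
    have e2 : ∀ᶠ n in atTop, δ n < 1 - y := hδ.eventually (gt_mem_nhds (by linarith [hy.2]))
    filter_upwards [e1, e2] with n h1 h2
    exact indicator_of_mem (show y ∈ Ioo (δ n) (1 - δ n) from ⟨h1, by linarith⟩) _
  refine ⟨fun y => liminf (fun n => (I n).indicator (RL n) y) atTop,
    fun y => liminf (fun n => (I n).indicator (RR n) y) atTop,
    fun x => liminf (fun n => (I n).indicator (V n) x) atTop,
    Measurable.liminf fun n => (hRLm n).indicator (hIm n),
    Measurable.liminf fun n => (hRRm n).indicator (hIm n), ?_, ?_, ?_, ?_⟩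
  · have hstep : ∀ n, (∫⁻ x in Ioo 0 1, ENNReal.ofReal (h x) * (I n).indicator (V n) x) +
        ∫⁻ y in Ioo 0 1, ((I n).indicator (RL n) y + (I n).indicator (RR n) y) ≤ c n := by
      intro n
      have a1 : (∫⁻ x in Ioo 0 1, ENNReal.ofReal (h x) * (I n).indicator (V n) x) ≤
          ∫⁻ x in I n, ∫⁻ y in I n, ENNReal.ofReal (h x) * ‖F₂ n (x, y)‖ₑ := by
        refine (setLIntegral_le_lintegral _ _).trans ?_
        rw [← lintegral_indicator (hIm n)]
        apply lintegral_mono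
        intro x
        by_cases hx : x ∈ I n
        · simp only [indicator_of_mem hx, hV, inter_univ, ENNReal.ofReal_one, one_mul]
          rw [lintegral_const_mul' _ _ ENNReal.ofReal_ne_top]
        · simp [indicator_of_notMem hx]
      have a2 : (∫⁻ y in Ioo 0 1, ((I n).indicator (RL n) y + (I n).indicator (RR n) y)) ≤
          ∫⁻ y in I n, ∫⁻ x in I n, G n (x, y) := by
        refine (setLIntegral_le_lintegral _ _).trans ?_
        rw [← lintegral_indicator (hIm n)]
        apply lintegral_mono
        intro y
        by_cases hy : y ∈ I n
        · simp only [indicator_of_mem hy, hRL, hRR]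
          have : (Ioi x₀ : Set ℝ) = (Iic x₀)ᶜ := by simp
          rw [this, ← sdiff_eq, lintegral_inter_add_sdiff _ _ measurableSet_Iic]
        · simp [indicator_of_notMem hy]
      have b1 : ∫⁻ x in I n, ∫⁻ y in I n, ENNReal.ofReal (h x) * ‖F₂ n (x, y)‖ₑ =
          ∫⁻ p in I n ×ˢ I n, ENNReal.ofReal (h p.1) * ‖F₂ n p‖ₑ := by
        rw [Measure.volume_eq_prod, ← Measure.prod_restrict, lintegral_prod]
        exact ((hh.comp measurable_fst).ennreal_ofReal.mul (hVm n)).aemeasurable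
      have b2 : ∫⁻ y in I n, ∫⁻ x in I n, G n (x, y) = ∫⁻ p in I n ×ˢ I n, G n p := by
        rw [Measure.volume_eq_prod, ← Measure.prod_restrict, lintegral_prod_symm]
        exact (hGm n).aemeasurable
      refine (add_le_add a1 a2).trans ?_
      rw [b1, b2, ← lintegral_add_right _ (hGm n)]
      refine le_trans (lintegral_mono fun p => ?_) (hintg n)
      have hb := hN n p (g p.1) (h p.1) (hg0 _) (hh0 _) (hgh _)
      refine le_trans ?_ (ENNReal.ofReal_le_ofReal hb)
      rw [ENNReal.ofReal_add (mul_nonneg (hg0 _) (abs_nonneg _))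
        (mul_nonneg (hh0 _) (abs_nonneg _)), ENNReal.ofReal_mul (hg0 _), ENNReal.ofReal_mul (hh0 _),
        add_comm, hG]
      simp only [← ofReal_norm, Real.norm_eq_abs]
      exact le_rfl
    rw [← hc.liminf_eq]
    refine le_trans ?_ (liminf_le_liminf (Eventually.of_forall hstep))
    refine le_trans ?_ (liminf_superadd _ _)
    apply add_le_add
    · refine le_trans ?_ (lintegral_liminf_le fun n =>
        hh.ennreal_ofReal.mul ((hVm' n).indicator (hIm n)))
      apply lintegral_mono
      intro x
      have : ∀ (a : ℝ≥0∞) (u : ℕ → ℝ≥0∞), a * liminf u atTop ≤ liminf (fun n => a * u n) atTop := by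
        intro a u
        rw [liminf_eq_iSup_iInf_of_nat, liminf_eq_iSup_iInf_of_nat, ENNReal.mul_iSup]
        refine iSup_mono fun n => le_iInf₂ fun i hi => ?_
        gcongr
        exact iInf₂_le i hi
      exact this _ _
    · refine le_trans ?_ (lintegral_liminf_le fun n =>
        ((hRLm n).indicator (hIm n)).add ((hRRm n).indicator (hIm n)))
      exact lintegral_mono fun y => liminf_superadd _ _
  · intro p p' y c hy hp hpp hp' hx₀ hC hC' hS hgc
    simp only [hind RL y hy]
    exact jump_le (fun n x => hF₁ n x y) (fun n => (hc₁ n).comp (by fun_prop)) hδ hp hpp hp'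
      (fun x hx => hx.2.trans hx₀) hgc hC hC' (lim_of_mem hS)
  · intro p p' y c hy hp hpp hp' hx₀ hC hC' hS hgc
    simp only [hind RR y hy]
    exact jump_le (fun n x => hF₁ n x y) (fun n => (hc₁ n).comp (by fun_prop)) hδ hp hpp hp'
      (fun x hx => hx₀.trans_lt hx.1) hgc hC hC' (lim_of_mem hS)
  · intro p p' x hx hp hpp hp' hC hC' hS
    simp only [hind V x hx]
    rw [← ENNReal.ofReal_one]
    exact jump_le (g := fun _ => 1) (fun n y => hF₂ n x y) (fun n => (hc₂ n).comp (by fun_prop)) hδ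
      hp hpp hp' (fun _ _ => mem_univ _) (fun _ _ => le_rfl) hC hC' (lim_of_mem hS)

/-! ### One-dimensional rearrangement -/

/-- The measure of the part of `X` to the left of `x`. -/
def mL (X : Set ℝ) (x : ℝ) : ℝ := (volume (X ∩ Iio x)).toReal

/-- The measure of the part of `X` to the right of `x`, expressed by the reflection `t ↦ 1 - t`. -/
def mR (X : Set ℝ) (x : ℝ) : ℝ := mL ((fun t : ℝ => 1 - t) ⁻¹' X) (1 - x)

section rearrange
variable {X : Set ℝ}

lemma fin_of_sub (hX : X ⊆ Ioo 0 1) : volume X ≠ ⊤ :=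
  measure_ne_top_of_subset hX (by simp)

lemma mL_nonneg (x : ℝ) : 0 ≤ mL X x := ENNReal.toReal_nonneg

lemma mL_mono (hX : X ⊆ Ioo 0 1) : Monotone (mL X) := fun _ _ hab =>
  ENNReal.toReal_mono (measure_ne_top_of_subset inter_subset_left (fin_of_sub hX))
    (measure_mono (inter_subset_inter_right _ (Iio_subset_Iio hab)))

lemma mL_le (hX : X ⊆ Ioo 0 1) (x : ℝ) : mL X x ≤ (volume X).toReal :=
  ENNReal.toReal_mono (fin_of_sub hX) (measure_mono inter_subset_left)

lemma mL_cont (hX : X ⊆ Ioo 0 1) : Continuous (mL X) := by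
  have h : ∀ a b, a ≤ b → mL X b - mL X a ≤ b - a := by
    intro a b hab
    have hfin := measure_ne_top_of_subset (μ := volume) (inter_subset_left (t := Iio a))
      (fin_of_sub hX)
    have h1 : volume (X ∩ Iio b) ≤ volume (X ∩ Iio a) + ENNReal.ofReal (b - a) := by
      rw [← Real.volume_Ico]
      refine (measure_mono ?_).trans (measure_union_le _ _)
      intro x hx
      rcases lt_or_ge x a with h | h
      · exact Or.inl ⟨hx.1, h⟩
      · exact Or.inr ⟨h, hx.2⟩
    have h2 := ENNReal.toReal_mono (ENNReal.add_ne_top.2 ⟨hfin, ENNReal.ofReal_ne_top⟩) h1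
    rw [ENNReal.toReal_add hfin ENNReal.ofReal_ne_top, ENNReal.toReal_ofReal (by linarith)] at h2
    rw [mL, mL]; linarith
  have : LipschitzWith 1 (mL X) := by
    apply LipschitzWith.of_le_add_mul
    intro a b
    rw [Real.dist_eq, NNReal.coe_one, one_mul]
    rcases le_total a b with hab | hab
    · linarith [mL_mono hX hab, abs_nonneg (a - b)]
    · linarith [h b a hab, le_abs_self (a - b)]
  exact this.continuous

/-- The function `mL X` transports Lebesgue measure on `X` to Lebesgue measure on `[0, |X|]`. -/
lemma mL_map (hX : X ⊆ Ioo 0 1) :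
    Measure.map (mL X) (volume.restrict X) = volume.restrict (Icc 0 (volume X).toReal) := by
  have hfin := fin_of_sub hX
  have : IsFiniteMeasure (volume.restrict X) := ⟨by simpa using hfin.lt_top⟩
  have hc := mL_cont hX
  have hm0 : mL X 0 = 0 := by
    rw [mL]
    have : X ∩ Iio 0 = ∅ := by
      ext x; simp only [mem_inter_iff, mem_Iio, mem_empty_iff_false, iff_false, not_and, not_lt]
      exact fun hx => (hX hx).1.le
    rw [this]; simp
  have hm1 : mL X 1 = (volume X).toReal := by
    rw [mL, inter_eq_left.2 (show X ⊆ Iio 1 from fun x hx => (hX hx).2)]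
  apply Measure.ext_of_Iic
  intro a
  rw [Measure.map_apply hc.measurable measurableSet_Iic,
    Measure.restrict_apply (hc.measurable measurableSet_Iic), Measure.restrict_apply measurableSet_Iic]
  rcases lt_or_ge a 0 with ha | ha
  · have e1 : mL X ⁻¹' Iic a ∩ X = ∅ := by
      ext x; simp only [mem_inter_iff, mem_preimage, mem_Iic, mem_empty_iff_false, iff_false]
      rintro ⟨h, -⟩; linarith [mL_nonneg (X := X) x]
    have e2 : Iic a ∩ Icc 0 (volume X).toReal = ∅ := by
      ext x; simp only [mem_inter_iff, mem_Icc, mem_Iic, mem_empty_iff_false, iff_false]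
      rintro ⟨h, h', -⟩; linarith
    rw [e1, e2]
  rcases le_total (volume X).toReal a with hwa | hwa
  · rw [inter_eq_right.2 (show X ⊆ mL X ⁻¹' Iic a from fun x _ => (mL_le hX x).trans hwa),
      inter_eq_right.2 (show Icc 0 (volume X).toReal ⊆ Iic a from fun x hx => hx.2.trans hwa)]
    simp [ENNReal.ofReal_toReal hfin]
  have e2 : Iic a ∩ Icc 0 (volume X).toReal = Icc 0 a := by
    ext x; simp only [mem_inter_iff, mem_Icc, mem_Iic]
    exact ⟨fun h => ⟨h.2.1, h.1⟩, fun h => ⟨h.2, h.1, h.2.trans hwa⟩⟩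
  rw [e2, Real.volume_Icc, sub_zero]
  apply le_antisymm
  · -- `{m ≤ a} ∩ [0, 1]` is compact; its largest element bounds the set on the left
    have hK : IsCompact (Icc 0 1 ∩ mL X ⁻¹' Iic a) :=
      isCompact_Icc.inter_right (isClosed_Iic.preimage hc)
    obtain ⟨s, hs, hmax⟩ := hK.exists_isGreatest ⟨0, by simp, by simpa [hm0] using ha⟩
    calc volume (mL X ⁻¹' Iic a ∩ X) ≤ volume (X ∩ Iic s) := by
          apply measure_mono
          intro x hx
          exact ⟨hx.2, hmax ⟨Ioo_subset_Icc_self (hX hx.2), hx.1⟩⟩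
      _ ≤ volume (X ∩ Iio s) := by
          have : X ∩ Iic s ⊆ (X ∩ Iio s) ∪ {s} := by
            intro x hx
            rcases (show x ≤ s from hx.2).lt_or_eq with h | h
            · exact Or.inl ⟨hx.1, h⟩
            · exact Or.inr h
          refine (measure_mono this).trans ((measure_union_le _ _).trans ?_)
          simp
      _ = ENNReal.ofReal (mL X s) :=
          (ENNReal.ofReal_toReal (measure_ne_top_of_subset inter_subset_left hfin)).symm
      _ ≤ _ := ENNReal.ofReal_le_ofReal hs.2
  · obtain ⟨s, -, hs⟩ := intermediate_value_Icc zero_le_one hc.continuousOn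
      (show a ∈ Icc (mL X 0) (mL X 1) from ⟨by rw [hm0]; exact ha, by rw [hm1]; exact hwa⟩)
    rw [← hs, mL, ENNReal.ofReal_toReal (measure_ne_top_of_subset inter_subset_left hfin)]
    apply measure_mono
    intro x hx
    refine ⟨?_, hx.1⟩
    exact mL_mono hX (le_of_lt hx.2)

lemma refl_sub (hX : X ⊆ Ioo 0 1) : (fun t : ℝ => 1 - t) ⁻¹' X ⊆ Ioo 0 1 := by
  intro t ht
  have := hX ht
  exact ⟨by linarith [this.2], by linarith [this.1]⟩

lemma refl_mp : MeasurePreserving (fun t : ℝ => 1 - t) volume volume :=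
  Measure.measurePreserving_sub_left volume 1

lemma refl_vol (hXm : MeasurableSet X) : volume ((fun t : ℝ => 1 - t) ⁻¹' X) = volume X :=
  refl_mp.measure_preimage hXm.nullMeasurableSet

lemma mR_nonneg (x : ℝ) : 0 ≤ mR X x := ENNReal.toReal_nonneg

lemma mR_anti (hX : X ⊆ Ioo 0 1) : Antitone (mR X) := fun _ _ hab =>
  mL_mono (refl_sub hX) (by linarith)

lemma mR_le (hX : X ⊆ Ioo 0 1) (hXm : MeasurableSet X) (x : ℝ) : mR X x ≤ (volume X).toReal := by
  rw [← refl_vol hXm]; exact mL_le (refl_sub hX) _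

lemma mR_cont (hX : X ⊆ Ioo 0 1) : Continuous (mR X) :=
  (mL_cont (refl_sub hX)).comp (by fun_prop)

lemma mR_map (hX : X ⊆ Ioo 0 1) (hXm : MeasurableSet X) :
    Measure.map (mR X) (volume.restrict X) = volume.restrict (Icc 0 (volume X).toReal) := by
  have hX' := refl_sub hX
  have hXm' : MeasurableSet ((fun t : ℝ => 1 - t) ⁻¹' X) := refl_mp.measurable hXm
  have h1 := (refl_mp.restrict_preimage hXm').map_eq
  have h2 : (fun t : ℝ => 1 - t) ⁻¹' ((fun t : ℝ => 1 - t) ⁻¹' X) = X := by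
    ext t; simp
  rw [h2] at h1
  have h3 := mL_map hX'
  rw [refl_vol hXm, ← h1, Measure.map_map (mL_cont hX').measurable refl_mp.measurable] at h3
  exact h3

/-- The sublevel sets of a map transporting `X` to `[0, |X|]` satisfy `|{x ∈ X : m x ≤ a}| ≤ a`. -/
lemma sublevel_le {m : ℝ → ℝ} {w a : ℝ} (hm : Measurable m)
    (hmap : Measure.map m (volume.restrict X) = volume.restrict (Icc 0 w)) :
    volume (X ∩ {x | m x ≤ a}) ≤ ENNReal.ofReal a := by
  have h1 : volume.restrict X (m ⁻¹' Iic a) ≤ ENNReal.ofReal a := by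
    rw [← Measure.map_apply hm measurableSet_Iic, hmap, Measure.restrict_apply measurableSet_Iic]
    refine (measure_mono (t := Icc 0 a) fun x hx => ⟨hx.2.1, hx.1⟩).trans ?_
    simp
  rw [Measure.restrict_apply (hm measurableSet_Iic), inter_comm] at h1
  exact h1

end rearrange

/-! ### Quarter-circle integral -/

/-- The profile whose integral over `[0, w]` is `π w / 4`. -/
def prof (w t : ℝ) : ℝ := Real.sqrt (1 - (t / w) ^ 2)

lemma prof_nonneg (w t : ℝ) : 0 ≤ prof w t := Real.sqrt_nonneg _

lemma prof_cont (w : ℝ) : Continuous (prof w) := by unfold prof; fun_prop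

lemma prof_anti {w s t : ℝ} (hw : 0 < w) (hs : 0 ≤ s) (hst : s ≤ t) : prof w t ≤ prof w s := by
  unfold prof
  apply Real.sqrt_le_sqrt
  have h1 : s / w ≤ t / w := by gcongr
  have h2 : 0 ≤ s / w := by positivity
  nlinarith

lemma integral_prof {w : ℝ} (hw : 0 < w) :
    ∫⁻ t in Icc 0 w, ENNReal.ofReal (prof w t) = ENNReal.ofReal (Real.pi * w / 4) := by
  have hintg : ∀ a b : ℝ, IntervalIntegrable (fun x : ℝ => Real.sqrt (1 - x ^ 2)) volume a b :=
    fun a b => Continuous.intervalIntegrable (by fun_prop) a b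
  have h1 := integral_sqrt_one_sub_sq
  have h2 : ∫ x in (-1 : ℝ)..0, Real.sqrt (1 - x ^ 2) = ∫ x in (0 : ℝ)..1, Real.sqrt (1 - x ^ 2) := by
    have := intervalIntegral.integral_comp_neg (a := -1) (b := 0)
      (fun x : ℝ => Real.sqrt (1 - x ^ 2))
    simp only [neg_sq, neg_zero, neg_neg] at this
    exact this
  rw [← intervalIntegral.integral_add_adjacent_intervals (hintg (-1) 0) (hintg 0 1), h2] at h1
  have h3 : ∫ t in (0 : ℝ)..w, prof w t = Real.pi * w / 4 := by
    have := intervalIntegral.integral_comp_div (a := 0) (b := w)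
      (fun x : ℝ => Real.sqrt (1 - x ^ 2)) hw.ne'
    rw [zero_div, div_self hw.ne', smul_eq_mul] at this
    rw [show (∫ t in (0 : ℝ)..w, prof w t) = _ from this]
    nlinarith
  rw [← ofReal_integral_eq_lintegral_ofReal]
  · rw [integral_Icc_eq_integral_Ioc, ← intervalIntegral.integral_of_le hw.le, h3]
  · exact (prof_cont w).continuousOn.integrableOn_compact isCompact_Icc
  · exact ae_of_all _ fun t => prof_nonneg w t

/-- Since the profile decreases, cutting `[0, a + b]` and moving the far piece to the origin
increases the integral. -/
lemma prof_split {a b : ℝ} (ha : 0 ≤ a) (hab : 0 < a + b) :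
    ENNReal.ofReal (Real.pi * (a + b) / 4) ≤
      (∫⁻ t in Icc 0 a, ENNReal.ofReal (prof (a + b) t)) +
        ∫⁻ t in Icc 0 b, ENNReal.ofReal (prof (a + b) t) := by
  rw [← integral_prof hab]
  have h1 : Icc 0 (a + b) ⊆ Icc 0 a ∪ Icc a (a + b) := by
    intro x hx
    rcases le_total x a with h | h
    · exact Or.inl ⟨hx.1, h⟩
    · exact Or.inr ⟨h, hx.2⟩
  refine (lintegral_mono_set h1).trans ((lintegral_union_le _ _ _).trans ?_)
  refine add_le_add le_rfl ?_
  have hmp : MeasurePreserving (fun t : ℝ => a + t) volume volume :=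
    measurePreserving_add_left volume a
  have h2 := hmp.setLIntegral_comp_preimage measurableSet_Icc (s := Icc a (a + b))
    (f := fun t => ENNReal.ofReal (prof (a + b) t)) (prof_cont _).measurable.ennreal_ofReal
  have h3 : (fun t : ℝ => a + t) ⁻¹' Icc a (a + b) = Icc 0 b := by
    ext x; simp
  rw [h3] at h2
  rw [← h2]
  apply setLIntegral_mono' measurableSet_Icc
  intro t ht
  exact ENNReal.ofReal_le_ofReal (prof_anti hab ht.1 (by linarith))

/-! ### Crossing rows and columns -/

/-- The part of the column of `S` at abscissa `x` inside the unit square. -/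
def col (S : Set (ℝ × ℝ)) (x : ℝ) : Set ℝ := {y | y ∈ Ioo (0 : ℝ) 1 ∧ (x, y) ∈ S}

/-- The part of the row of `S` at height `y` inside the unit square. -/
def row (S : Set (ℝ × ℝ)) (y : ℝ) : Set ℝ := {x | x ∈ Ioo (0 : ℝ) 1 ∧ (x, y) ∈ S}

/-- Abscissae whose column meets both `S` and its complement in positive measure. -/
def crossX (S : Set (ℝ × ℝ)) : Set ℝ :=
  {x | x ∈ Ioo (0 : ℝ) 1 ∧ volume (col S x) ≠ 0 ∧ volume (col Sᶜ x) ≠ 0}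

/-- Heights whose row meets both `S` and its complement in positive measure. -/
def crossY (S : Set (ℝ × ℝ)) : Set ℝ :=
  {y | y ∈ Ioo (0 : ℝ) 1 ∧ volume (row S y) ≠ 0 ∧ volume (row Sᶜ y) ≠ 0}

lemma col_measurable {S : Set (ℝ × ℝ)} (hS : MeasurableSet S) :
    Measurable fun x => volume (col S x) :=
  measurable_measure_prodMk_left (ν := volume) (((measurable_snd measurableSet_Ioo).inter hS))

lemma row_measurable {S : Set (ℝ × ℝ)} (hS : MeasurableSet S) :
    Measurable fun x => volume (row S x) :=
  measurable_measure_prodMk_right (μ := volume) (((measurable_fst measurableSet_Ioo).inter hS))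

lemma crossX_measurable {S : Set (ℝ × ℝ)} (hS : MeasurableSet S) : MeasurableSet (crossX S) :=
  measurableSet_Ioo.inter (((col_measurable hS) (measurableSet_singleton 0).compl).inter
    ((col_measurable hS.compl) (measurableSet_singleton 0).compl))

lemma crossY_measurable {S : Set (ℝ × ℝ)} (hS : MeasurableSet S) : MeasurableSet (crossY S) :=
  measurableSet_Ioo.inter (((row_measurable hS) (measurableSet_singleton 0).compl).inter
    ((row_measurable hS.compl) (measurableSet_singleton 0).compl))

lemma crossX_sub (S : Set (ℝ × ℝ)) : crossX S ⊆ Ioo 0 1 := fun _ h => h.1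

lemma crossY_sub (S : Set (ℝ × ℝ)) : crossY S ⊆ Ioo 0 1 := fun _ h => h.1

lemma exists_of_ae {A : Set ℝ} (hA : volume A ≠ 0) {P : ℝ → Prop} (hP : ∀ᵐ y : ℝ, P y) :
    ∃ y ∈ A, P y :=
  ((frequently_ae_mem_iff.2 hA).and_eventually hP).exists

/-- The slicing inequality with the column term restricted to crossing columns. -/
theorem slicing_cross {E : Set (En 2)} (hE : MeasurableSet E)
    (hP : μH[1] (essBoundary E ∩ unitSq) ≠ ⊤) :
    ∃ C : Set (ℝ × ℝ), (∀ᵐ p : ℝ × ℝ, p ∈ C) ∧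
      ∀ (g h : ℝ → ℝ), Measurable g → Measurable h → (∀ x, 0 ≤ g x) → (∀ x, 0 ≤ h x) →
      (∀ x, g x ^ 2 + h x ^ 2 ≤ 1) → ∀ x₀ : ℝ, ∃ IL IR : ℝ → ℝ≥0∞,
        Measurable IL ∧ Measurable IR ∧
        (∫⁻ x in crossX (plane E), ENNReal.ofReal (h x)) + ∫⁻ y in Ioo 0 1, (IL y + IR y) ≤
          μH[1] (essBoundary E ∩ unitSq) ∧
        (∀ p p' y c, y ∈ Ioo (0 : ℝ) 1 → 0 < p → p ≤ p' → p' < 1 → p' ≤ x₀ →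
          (p, y) ∈ C → (p', y) ∈ C → ¬ ((p, y) ∈ plane E ↔ (p', y) ∈ plane E) →
          (∀ x ∈ Ioc p p', c ≤ g x) → ENNReal.ofReal c ≤ IL y) ∧
        (∀ p p' y c, y ∈ Ioo (0 : ℝ) 1 → 0 < p → p ≤ p' → p' < 1 → x₀ ≤ p →
          (p, y) ∈ C → (p', y) ∈ C → ¬ ((p, y) ∈ plane E ↔ (p', y) ∈ plane E) →
          (∀ x ∈ Ioc p p', c ≤ g x) → ENNReal.ofReal c ≤ IR y) := by
  obtain ⟨C, hC, H⟩ := slicing hE hP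
  refine ⟨C, hC, fun g h hg hh hg0 hh0 hgh x₀ => ?_⟩
  obtain ⟨IL, IR, K, hIL, hIR, hle, hL, hR, hK⟩ := H g h hg hh hg0 hh0 hgh x₀
  refine ⟨IL, IR, hIL, hIR, le_trans (add_le_add ?_ le_rfl) hle, hL, hR⟩
  refine le_trans ?_ (lintegral_mono_set (crossX_sub (plane E)))
  apply setLIntegral_mono_ae' (crossX_measurable (plane_measurable hE))
  filter_upwards [Measure.ae_ae_of_ae_prod hC] with x hx hxX
  have h1 : 1 ≤ K x := by
    obtain ⟨p, hp, hpC⟩ := exists_of_ae hxX.2.1 hx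
    obtain ⟨q, hq, hqC⟩ := exists_of_ae hxX.2.2 hx
    rcases le_total p q with h | h
    · exact hK p q x hxX.1 hp.1.1 h hq.1.2 hpC hqC fun hh => hq.2 (hh.1 hp.2)
    · exact hK q p x hxX.1 hq.1.1 h hp.1.2 hqC hpC fun hh => hq.2 (hh.2 hp.2)
  exact le_mul_of_one_le_right' h1

/-- Projection bound: the perimeter dominates every unit combination of the measures of the sets
of crossing rows and crossing columns. -/
theorem cross_bound {E : Set (En 2)} (hE : MeasurableSet E)
    (hP : μH[1] (essBoundary E ∩ unitSq) ≠ ⊤) {a b : ℝ} (ha : 0 ≤ a) (hb : 0 ≤ b)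
    (hab : a ^ 2 + b ^ 2 ≤ 1) :
    ENNReal.ofReal b * volume (crossX (plane E)) + ENNReal.ofReal a * volume (crossY (plane E)) ≤
      μH[1] (essBoundary E ∩ unitSq) := by
  obtain ⟨C, hC, H⟩ := slicing_cross hE hP
  obtain ⟨IL, IR, hIL, hIR, hle, hL, -⟩ := H (fun _ => a) (fun _ => b) measurable_const
    measurable_const (fun _ => ha) (fun _ => hb) (fun _ => hab) 1
  refine le_trans (add_le_add ?_ ?_) hle
  · rw [setLIntegral_const]
  · rw [← setLIntegral_const]
    refine le_trans ?_ (lintegral_mono_set (crossY_sub (plane E)))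
    apply setLIntegral_mono_ae' (crossY_measurable (plane_measurable hE))
    filter_upwards [ae_slice_swap hC] with y hy hyY
    refine le_trans ?_ le_self_add
    obtain ⟨p, hp, hpC⟩ := exists_of_ae hyY.2.1 hy
    obtain ⟨q, hq, hqC⟩ := exists_of_ae hyY.2.2 hy
    rcases le_total p q with h | h
    · exact hL p q y a hyY.1 hp.1.1 h hq.1.2 hq.1.2.le hpC hqC (fun hh => hq.2 (hh.1 hp.2))
        fun _ _ => le_rfl
    · exact hL q p y a hyY.1 hq.1.1 h hp.1.2 hp.1.2.le hqC hpC (fun hh => hq.2 (hh.2 hp.2))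
        fun _ _ => le_rfl

/-! ### The main lower bound -/

/-- If no column is full and a positive measure of columns is empty, the perimeter is at least
`π w / 4 + ρ / w`, where `w` is the measure of the set of crossing columns and `ρ` the area. The
weights are chosen to calibrate the quarter-circle profile after rearranging the crossing columns
from both sides of an empty column `x₀`. -/
theorem quarter_bound {E : Set (En 2)} (hE : MeasurableSet E)
    (hP : μH[1] (essBoundary E ∩ unitSq) ≠ ⊤)
    (hempty : ∀ᵐ x : ℝ, x ∈ Ioo (0 : ℝ) 1 → x ∉ crossX (plane E) → volume (col (plane E) x) = 0)
    (hpos : volume (Ioo (0 : ℝ) 1 \ crossX (plane E)) ≠ 0)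
    {w : ℝ} (hw : 0 < w) (hwX : volume (crossX (plane E)) = ENNReal.ofReal w) :
    ENNReal.ofReal (Real.pi * w / 4) +
      volume (plane E ∩ Ioo 0 1 ×ˢ Ioo 0 1) / ENNReal.ofReal w ≤
      μH[1] (essBoundary E ∩ unitSq) := by
  set S := plane E with hSdef
  have hS : MeasurableSet S := plane_measurable hE
  set X := crossX S with hXdef
  have hX : MeasurableSet X := crossX_measurable hS
  have hXs : X ⊆ Ioo 0 1 := crossX_sub S
  obtain ⟨C, hC, H⟩ := slicing_cross hE hP
  have hcolS : ∀ᵐ x : ℝ, x ∈ Ioo (0 : ℝ) 1 → x ∉ X →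
      ∀ᵐ y : ℝ, y ∈ Ioo (0 : ℝ) 1 → (x, y) ∉ S := by
    filter_upwards [hempty] with x hx h1 h2
    have h3 : ∀ᵐ y : ℝ, y ∉ col S x := measure_eq_zero_iff_ae_notMem.1 (hx h1 h2)
    filter_upwards [h3] with y hy hy1 hy2
    exact hy ⟨hy1, hy2⟩
  -- a generic empty column
  obtain ⟨x₀, ⟨hx₀, hx₀X⟩, hx₀C, hx₀S⟩ :=
    exists_of_ae hpos ((Measure.ae_ae_of_ae_prod hC).and hcolS)
  have hx₀S := hx₀S hx₀ hx₀X
  -- almost every point of `S` in the square lies over `X`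
  have hover : ∀ᵐ p : ℝ × ℝ, p.1 ∈ Ioo (0 : ℝ) 1 → p.2 ∈ Ioo (0 : ℝ) 1 → p ∈ S → p.1 ∈ X := by
    have hmeas : MeasurableSet
        (((Ioo (0 : ℝ) 1 \ X) ×ˢ Ioo (0 : ℝ) 1 ∩ S)ᶜ : Set (ℝ × ℝ)) :=
      (((measurableSet_Ioo.diff hX).prod measurableSet_Ioo).inter hS).compl
    have h1 : ∀ᵐ p : ℝ × ℝ, p ∈ (((Ioo (0 : ℝ) 1 \ X) ×ˢ Ioo (0 : ℝ) 1 ∩ S)ᶜ : Set (ℝ × ℝ)) := by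
      rw [Measure.volume_eq_prod, Measure.ae_prod_mem_iff_ae_ae_mem hmeas]
      filter_upwards [hcolS] with x hx
      by_cases h : x ∈ Ioo (0 : ℝ) 1 \ X
      · filter_upwards [hx h.1 h.2] with y hy hyy
        exact hy hyy.1.2 hyy.2
      · exact ae_of_all _ fun y hyy => h hyy.1.1
    filter_upwards [h1] with p hp hp1 hp2 hpS
    by_contra hpX
    exact hp ⟨⟨⟨hp1, hpX⟩, hp2⟩, hpS⟩
  set XL := X ∩ Iio x₀ with hXL
  set XR := X ∩ Ioi x₀ with hXR
  have hXLs : XL ⊆ Ioo 0 1 := inter_subset_left.trans hXs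
  have hXRs : XR ⊆ Ioo 0 1 := inter_subset_left.trans hXs
  have hXLm : MeasurableSet XL := hX.inter measurableSet_Iio
  have hXRm : MeasurableSet XR := hX.inter measurableSet_Ioi
  have hdisj : Disjoint XL XR := by
    rw [Set.disjoint_left]
    rintro x ⟨-, h1⟩ ⟨-, h2⟩
    exact lt_asymm (show x < x₀ from h1) h2
  have hXeq : X = XL ∪ XR := by
    ext x
    constructor
    · intro hx
      rcases lt_trichotomy x x₀ with h | h | h
      · exact Or.inl ⟨hx, h⟩
      · exact absurd (h ▸ hx) hx₀X
      · exact Or.inr ⟨hx, h⟩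
    · rintro (h | h) <;> exact h.1
  set a := (volume XL).toReal with ha
  set b := (volume XR).toReal with hb
  have ha0 : 0 ≤ a := ENNReal.toReal_nonneg
  have hb0 : 0 ≤ b := ENNReal.toReal_nonneg
  have hwab : w = a + b := by
    rw [ha, hb, ← ENNReal.toReal_add (fin_of_sub hXLs) (fin_of_sub hXRs),
      ← measure_union hdisj hXRm, ← hXeq, hwX, ENNReal.toReal_ofReal hw.le]
  set m : ℝ → ℝ := fun x => if x ≤ x₀ then mL XL x else mR XR x with hm
  have hmm : Measurable m := Measurable.ite measurableSet_Iic (mL_cont hXLs).measurable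
    (mR_cont hXRs).measurable
  have hm0 : ∀ x, 0 ≤ m x := by
    intro x; simp only [hm]; split_ifs
    · exact mL_nonneg _
    · exact mR_nonneg _
  have hmw : ∀ x, m x ≤ w := by
    intro x; simp only [hm]; split_ifs
    · linarith [mL_le hXLs x]
    · linarith [mR_le hXRs hXRm x]
  obtain ⟨IL, IR, hIL, hIR, hle, hL, hR⟩ := H (fun x => m x / w) (fun x => prof w (m x))
    (hmm.div_const w) ((prof_cont w).measurable.comp hmm)
    (fun x => div_nonneg (hm0 x) hw.le) (fun x => prof_nonneg _ _) (fun x => by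
      have h1 : m x / w ≤ 1 := (div_le_one hw).2 (hmw x)
      have h2 : 0 ≤ m x / w := div_nonneg (hm0 x) hw.le
      rw [prof, Real.sq_sqrt (by nlinarith)]
      linarith) x₀
  refine le_trans (add_le_add ?_ ?_) hle
  · rw [show crossX (plane E) = XL ∪ XR from hXeq, lintegral_union hXRm hdisj, hwab]
    refine (prof_split ha0 (by linarith)).trans (add_le_add ?_ ?_)
    · have h1 := lintegral_map (μ := volume.restrict XL)
        (f := fun t => ENNReal.ofReal (prof (a + b) t))
        (prof_cont _).measurable.ennreal_ofReal (mL_cont hXLs).measurable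
      rw [mL_map hXLs] at h1
      rw [h1]
      refine (setLIntegral_congr_fun hXLm fun x hx => ?_).le
      have hxx : x < x₀ := hx.2
      simp only [hm, if_pos hxx.le]
    · have h1 := lintegral_map (μ := volume.restrict XR)
        (f := fun t => ENNReal.ofReal (prof (a + b) t))
        (prof_cont _).measurable.ennreal_ofReal (mR_cont hXRs).measurable
      rw [mR_map hXRs hXRm] at h1
      rw [h1]
      refine (setLIntegral_congr_fun hXRm fun x hx => ?_).le
      have hxx : x₀ < x := hx.2
      simp only [hm, if_neg (not_le_of_gt hxx)]
  · have hw0 : ENNReal.ofReal w ≠ 0 := by simpa using hw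
    apply ENNReal.div_le_of_le_mul
    rw [mul_comm, ← lintegral_const_mul' _ _ ENNReal.ofReal_ne_top]
    have hvol : volume (S ∩ Ioo 0 1 ×ˢ Ioo 0 1) = ∫⁻ y in Ioo 0 1, volume (row S y) := by
      rw [Measure.volume_eq_prod, Measure.prod_apply_symm
        (hS.inter (measurableSet_Ioo.prod measurableSet_Ioo)),
        ← lintegral_indicator measurableSet_Ioo]
      congr 1
      ext y
      by_cases hy : y ∈ Ioo (0 : ℝ) 1
      · rw [indicator_of_mem hy]
        congr 1
        ext x
        simp only [mem_preimage, mem_inter_iff, mem_prod, row, mem_ofPred_eq]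
        tauto
      · rw [indicator_of_notMem hy]
        convert measure_empty (μ := (volume : Measure ℝ))
        ext x
        simp only [mem_preimage, mem_inter_iff, mem_prod, mem_empty_iff_false, iff_false]
        tauto
    rw [hvol]
    apply setLIntegral_mono_ae' measurableSet_Ioo
    filter_upwards [ae_slice_swap hC, ae_slice_swap hover, hx₀C, hx₀S] with y h1 h2 h3 h4 hy
    have h4 := h4 hy
    -- it suffices to bound the two halves of the row
    have side : ∀ (I : ℝ≥0∞) (Z : Set ℝ) (mm : ℝ → ℝ) (A : Set ℝ) (v : ℝ), Measurable mm →
        Measure.map mm (volume.restrict Z) = volume.restrict (Icc 0 v) →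
        (∀ᵐ x : ℝ, x ∈ A → x ∈ Z ∧ ENNReal.ofReal (mm x / w) ≤ I) →
        volume A ≤ ENNReal.ofReal w * I := by
      intro I Z mm A v hmm hmap hA
      by_cases hI : I = ⊤
      · rw [hI, ENNReal.mul_top hw0]; exact le_top
      have := sublevel_le (a := w * I.toReal) hmm hmap
      rw [ENNReal.ofReal_mul hw.le, ENNReal.ofReal_toReal hI] at this
      refine le_trans (measure_mono_ae ?_) this
      filter_upwards [hA] with x hx hxA
      obtain ⟨hxZ, hxI⟩ := hx hxA
      refine ⟨hxZ, ?_⟩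
      have h5 := (ENNReal.ofReal_le_iff_le_toReal hI).1 hxI
      rw [div_le_iff₀ hw] at h5
      rw [mem_ofPred_eq]; linarith
    have hsplit : volume (row S y) ≤ volume (row S y ∩ Iio x₀) + volume (row S y ∩ Ioi x₀) := by
      have : row S y ⊆ (row S y ∩ Iio x₀) ∪ (row S y ∩ Ioi x₀) := by
        intro x hx
        rcases lt_trichotomy x x₀ with h | h | h
        · exact Or.inl ⟨hx, h⟩
        · exact absurd (h ▸ hx.2) h4
        · exact Or.inr ⟨hx, h⟩
      exact (measure_mono this).trans (measure_union_le _ _)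
    refine hsplit.trans ?_
    rw [mul_add]
    apply add_le_add
    · apply side (IL y) XL (mL XL) _ a (mL_cont hXLs).measurable (mL_map hXLs)
      filter_upwards [h1, h2] with x hxC hxX hx
      have hxx : x < x₀ := hx.2
      refine ⟨⟨hxX hx.1.1 hy hx.1.2, hxx⟩, ?_⟩
      refine hL x x₀ y _ hy hx.1.1.1 hxx.le hx₀.2 le_rfl hxC h3 (fun hh => h4 (hh.1 hx.1.2)) ?_
      intro t ht
      simp only [hm, if_pos ht.2]
      have := mL_mono hXLs ht.1.le
      gcongr
    · apply side (IR y) XR (mR XR) _ b (mR_cont hXRs).measurable (mR_map hXRs hXRm)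
      filter_upwards [h1, h2] with x hxC hxX hx
      have hxx : x₀ < x := hx.2
      refine ⟨⟨hxX hx.1.1 hy hx.1.2, hxx⟩, ?_⟩
      refine hR x₀ x y _ hy hx₀.1 hxx.le hx.1.1.2 le_rfl h3 hxC (fun hh => h4 (hh.2 hx.1.2)) ?_
      intro t ht
      simp only [hm, if_neg (not_le_of_gt ht.1)]
      have := mR_anti hXRs ht.2
      gcongr

/-! ### Competitors -/

lemma unitSq_open : IsOpen unitSq :=
  (isOpen_Ioo.preimage (by fun_prop : Continuous fun p : En 2 => p 0)).inter
    (isOpen_Ioo.preimage (by fun_prop : Continuous fun p : En 2 => p 1))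

lemma ess_of_nhds {E : Set (En 2)} {x : En 2} (h : E ∈ 𝓝 x) : x ∉ essBoundary E := by
  intro hx
  apply (mem_ess.1 hx).2
  obtain ⟨ε, hε, hb⟩ := Metric.mem_nhds_iff.1 h
  refine Tendsto.congr' ?_ (tendsto_const_nhds (x := (1 : ℝ≥0∞)))
  filter_upwards [Ioo_mem_nhdsGT hε] with r hr
  rw [ratio, inter_eq_right.2 ((ball_subset_ball hr.2.le).trans hb),
    ENNReal.div_self (vball_pos x hr.1) (vball_top x r)]

lemma ess_of_nhds_compl {E : Set (En 2)} {x : En 2} (h : Eᶜ ∈ 𝓝 x) : x ∉ essBoundary E := by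
  intro hx
  apply (mem_ess.1 hx).1
  obtain ⟨ε, hε, hb⟩ := Metric.mem_nhds_iff.1 h
  refine Tendsto.congr' ?_ (tendsto_const_nhds (x := (0 : ℝ≥0∞)))
  filter_upwards [Ioo_mem_nhdsGT hε] with r hr
  have : E ∩ ball x r = ∅ := by
    rw [← disjoint_iff_inter_eq_empty]
    exact disjoint_compl_right.mono_right ((ball_subset_ball hr.2.le).trans hb)
  rw [ratio, this]; simp

/-- In a region cut out of the square by `f < c`, the essential boundary lies on the level set. -/
lemma ess_level {f : En 2 → ℝ} (hf : Continuous f) {c : ℝ} {x : En 2} (hx : x ∈ unitSq)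
    (he : x ∈ essBoundary (unitSq ∩ {p | f p < c})) : f x = c := by
  by_contra hne
  rcases lt_or_gt_of_ne hne with h | h
  · exact ess_of_nhds ((unitSq_open.inter (isOpen_lt hf continuous_const)).mem_nhds ⟨hx, h⟩) he
  · refine ess_of_nhds_compl ?_ he
    filter_upwards [(isOpen_lt continuous_const hf).mem_nhds h] with z hz hz'
    exact lt_asymm (show c < f z from hz) hz'.2

lemma plane_unitSq : plane unitSq = Ioo 0 1 ×ˢ Ioo 0 1 := by
  ext p; simp [plane, unitSq, pt]

lemma plane_volume {E : Set (En 2)} (hE : MeasurableSet E) : volume (plane E) = volume E :=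
  pt_preimage (by norm_num) hE

lemma volume_unitSq : volume unitSq = 1 := by
  rw [← plane_volume unitSq_open.measurableSet, plane_unitSq, Measure.volume_eq_prod,
    Measure.prod_prod]
  simp

/-- The left half of the unit square. -/
def halfSq : Set (En 2) := unitSq ∩ {p | p 0 < 1 / 2}

lemma halfSq_volume : volume halfSq = ENNReal.ofReal (1 / 2) := by
  have hm : MeasurableSet halfSq :=
    (unitSq_open.inter (isOpen_lt (by fun_prop) continuous_const)).measurableSet
  have h : plane halfSq = Ioo 0 (1 / 2) ×ˢ Ioo 0 1 := by
    ext p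
    simp only [plane, halfSq, unitSq, pt, mem_preimage, mem_inter_iff, mem_ofPred_eq, mem_prod,
      mem_Ioo, Matrix.cons_val_zero, Matrix.cons_val_one, one_mul, zero_mul,
      sub_zero, zero_add]
    constructor
    · rintro ⟨⟨⟨h1, h2⟩, h3⟩, h4⟩
      exact ⟨⟨h1, h4⟩, h3⟩
    · rintro ⟨⟨h1, h4⟩, h3⟩
      exact ⟨⟨⟨h1, by linarith⟩, h3⟩, h4⟩
  rw [← plane_volume hm, h, Measure.volume_eq_prod, Measure.prod_prod]
  simp

lemma halfSq_perim : μH[1] (essBoundary halfSq ∩ unitSq) ≤ 1 := by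
  have hL : LipschitzWith 1 (fun y : ℝ => (!₂[1 / 2, y] : En 2)) := by
    apply LipschitzWith.of_dist_le_mul
    intro a b
    rw [NNReal.coe_one, one_mul]
    apply le_of_sq_le_sq _ dist_nonneg
    rw [dist_sq_coord, Real.dist_eq, sq_abs]
    simp
  have hsub : essBoundary halfSq ∩ unitSq ⊆ (fun y : ℝ => (!₂[1 / 2, y] : En 2)) '' Ioo 0 1 := by
    rintro x ⟨hx, hxs⟩
    have h0 : x 0 = 1 / 2 := ess_level (f := fun p => p 0) (by fun_prop) hxs hx
    refine ⟨x 1, hxs.2, ?_⟩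
    ext i; fin_cases i <;> simp [h0]
  refine (measure_mono hsub).trans ?_
  refine (hL.hausdorffMeasure_image_le zero_le_one _).trans ?_
  rw [hausdorffMeasure_real]
  simp

/-- The quarter disc of radius `3/5` at the corner of the unit square. -/
def quarterDisc : Set (En 2) := unitSq ∩ {p | p 0 ^ 2 + p 1 ^ 2 < 9 / 25}

lemma quarterDisc_volume : volume quarterDisc = ENNReal.ofReal (9 * Real.pi / 100) := by
  have hm : MeasurableSet quarterDisc :=
    (unitSq_open.inter (isOpen_lt (by fun_prop) continuous_const)).measurableSet
  have hslice : ∀ x : ℝ, volume (Prod.mk x ⁻¹' plane quarterDisc) =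
      (Ioo (0 : ℝ) (3 / 5)).indicator
        (fun x => ENNReal.ofReal (3 / 5) * ENNReal.ofReal (prof (3 / 5) x)) x := by
    intro x
    have hmem : ∀ y, y ∈ Prod.mk x ⁻¹' plane quarterDisc ↔
        ((0 < x ∧ x < 1) ∧ (0 < y ∧ y < 1)) ∧ x ^ 2 + y ^ 2 < 9 / 25 := by
      intro y
      simp [plane, quarterDisc, unitSq, pt]
    by_cases hx : x ∈ Ioo (0 : ℝ) (3 / 5)
    · rw [indicator_of_mem hx, ← ENNReal.ofReal_mul (by norm_num)]
      have : Prod.mk x ⁻¹' plane quarterDisc = Ioo 0 (3 / 5 * prof (3 / 5) x) := by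
        ext y
        rw [hmem, mem_Ioo]
        have key : 0 ≤ y → (y < 3 / 5 * prof (3 / 5) x ↔ x ^ 2 + y ^ 2 < 9 / 25) := by
          intro hy
          have h1 : y < 3 / 5 * prof (3 / 5) x ↔ y / (3 / 5) < prof (3 / 5) x := by
            rw [div_lt_iff₀ (by norm_num)]; constructor <;> intro h <;> linarith
          rw [h1, prof, Real.lt_sqrt (by positivity)]
          constructor <;> intro h <;> nlinarith
        constructor
        · rintro ⟨⟨-, h1, -⟩, h2⟩
          exact ⟨h1, (key h1.le).2 h2⟩
        · rintro ⟨h1, h2⟩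
          have h3 := (key h1.le).1 h2
          exact ⟨⟨⟨hx.1, by linarith [hx.2]⟩, h1, by nlinarith⟩, h3⟩
      rw [this, Real.volume_Ioo, sub_zero]
    · rw [indicator_of_notMem hx]
      convert measure_empty (μ := (volume : Measure ℝ))
      ext y
      rw [hmem]
      simp only [mem_empty_iff_false, iff_false]
      rintro ⟨⟨⟨h1, -⟩, -⟩, h2⟩
      exact hx ⟨h1, by nlinarith [sq_nonneg y]⟩
  rw [← plane_volume hm, Measure.volume_eq_prod, Measure.prod_apply (plane_measurable hm)]
  simp only [hslice]
  rw [lintegral_indicator measurableSet_Ioo, lintegral_const_mul' _ _ ENNReal.ofReal_ne_top,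
    setLIntegral_congr Ioo_ae_eq_Icc, integral_prof (by norm_num),
    ← ENNReal.ofReal_mul (by norm_num)]
  congr 1
  ring

lemma quarterDisc_perim :
    μH[1] (essBoundary quarterDisc ∩ unitSq) ≤ ENNReal.ofReal (3 * Real.pi / 10) := by
  set γ : ℝ → En 2 := fun θ => !₂[3 / 5 * Real.cos θ, 3 / 5 * Real.sin θ] with hγ
  have hL : LipschitzWith (3 / 5) γ := by
    apply LipschitzWith.of_dist_le_mul
    intro a b
    apply le_of_sq_le_sq _ (by positivity)
    rw [dist_sq_coord, mul_pow, Real.dist_eq, sq_abs]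
    have h1 := Real.one_sub_sq_div_two_le_cos (x := a - b)
    rw [Real.cos_sub] at h1
    have h2 := Real.sin_sq_add_cos_sq a
    have h3 := Real.sin_sq_add_cos_sq b
    simp only [hγ, PiLp.toLp_apply, Matrix.cons_val_zero, Matrix.cons_val_one]
    push_cast
    nlinarith
  have hsub : essBoundary quarterDisc ∩ unitSq ⊆ γ '' Icc 0 (Real.pi / 2) := by
    rintro x ⟨hx, hxs⟩
    have h0 : x 0 ^ 2 + x 1 ^ 2 = 9 / 25 :=
      ess_level (f := fun p => p 0 ^ 2 + p 1 ^ 2) (by fun_prop) hxs hx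
    have hx0 : 0 < x 0 := hxs.1.1
    have hx1 : 0 < x 1 := hxs.2.1
    have hs1 : 5 / 3 * x 1 ≤ 1 := by nlinarith
    refine ⟨Real.arcsin (5 / 3 * x 1), ⟨Real.arcsin_nonneg.2 (by positivity),
      Real.arcsin_le_pi_div_two _⟩, ?_⟩
    have hsin : Real.sin (Real.arcsin (5 / 3 * x 1)) = 5 / 3 * x 1 :=
      Real.sin_arcsin (by linarith) hs1
    have hcos : Real.cos (Real.arcsin (5 / 3 * x 1)) = 5 / 3 * x 0 := by
      rw [Real.cos_arcsin, show 1 - (5 / 3 * x 1) ^ 2 = (5 / 3 * x 0) ^ 2 by nlinarith,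
        Real.sqrt_sq (by positivity)]
    ext i; fin_cases i
    · simp only [hγ, hcos, hsin]; simp; ring
    · simp only [hγ, hcos, hsin]; simp; ring
  refine (measure_mono hsub).trans ?_
  refine (hL.hausdorffMeasure_image_le zero_le_one _).trans ?_
  rw [hausdorffMeasure_real, Real.volume_Icc, sub_zero, ENNReal.rpow_one]
  have : ((3 / 5 : NNReal) : ℝ≥0∞) = ENNReal.ofReal (3 / 5) := by
    rw [ENNReal.ofReal]; congr 1; ext; norm_num
  rw [this, ← ENNReal.ofReal_mul (by norm_num)]
  apply ENNReal.ofReal_le_ofReal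
  linarith

/-! ### Empty, full and crossing columns -/

/-- Abscissae in `(0,1)` whose column meets `S` in measure zero. Applied to `Sᶜ` it gives the
full columns of `S`. -/
def emptyX (S : Set (ℝ × ℝ)) : Set ℝ := {x | x ∈ Ioo (0 : ℝ) 1 ∧ volume (col S x) = 0}

/-- Abscissae in `(0,1)` whose column meets `S` in positive measure. -/
def suppX (S : Set (ℝ × ℝ)) : Set ℝ := {x | x ∈ Ioo (0 : ℝ) 1 ∧ volume (col S x) ≠ 0}

lemma emptyX_measurable {S : Set (ℝ × ℝ)} (hS : MeasurableSet S) : MeasurableSet (emptyX S) :=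
  measurableSet_Ioo.inter ((col_measurable hS) (measurableSet_singleton 0))

lemma suppX_sub (S : Set (ℝ × ℝ)) : suppX S ⊆ emptyX Sᶜ ∪ crossX S := by
  rintro x ⟨h1, h2⟩
  by_cases h : volume (col Sᶜ x) = 0
  · exact Or.inl ⟨h1, h⟩
  · exact Or.inr ⟨h1, h2, h⟩

lemma crossX_compl (S : Set (ℝ × ℝ)) : crossX Sᶜ = crossX S := by
  ext x
  simp only [crossX, mem_ofPred_eq, compl_compl]
  tauto

lemma crossY_eq (S : Set (ℝ × ℝ)) : crossY S = crossX (Prod.swap ⁻¹' S) := rfl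

lemma Ioo_split (S : Set (ℝ × ℝ)) : Ioo (0 : ℝ) 1 ⊆ emptyX S ∪ suppX S := by
  intro x hx
  by_cases h : volume (col S x) = 0
  · exact Or.inl ⟨hx, h⟩
  · exact Or.inr ⟨hx, h⟩

lemma vol_Ioo : volume (Ioo (0 : ℝ) 1) = 1 := by simp

lemma col_fubini {S : Set (ℝ × ℝ)} (hS : MeasurableSet S) :
    volume (S ∩ Ioo 0 1 ×ˢ Ioo 0 1) = ∫⁻ x in Ioo 0 1, volume (col S x) := by
  rw [Measure.volume_eq_prod, Measure.prod_apply
    (hS.inter (measurableSet_Ioo.prod measurableSet_Ioo)),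
    ← lintegral_indicator measurableSet_Ioo]
  congr 1
  ext y
  by_cases hy : y ∈ Ioo (0 : ℝ) 1
  · rw [indicator_of_mem hy]
    congr 1
    ext x
    simp only [mem_preimage, mem_inter_iff, mem_prod, col, mem_ofPred_eq]
    tauto
  · rw [indicator_of_notMem hy]
    convert measure_empty (μ := (volume : Measure ℝ))
    ext x
    simp only [mem_preimage, mem_inter_iff, mem_prod, mem_empty_iff_false, iff_false]
    tauto

lemma swap_volume {S : Set (ℝ × ℝ)} (hS : MeasurableSet S) :
    volume (Prod.swap ⁻¹' S ∩ Ioo (0 : ℝ) 1 ×ˢ Ioo (0 : ℝ) 1) =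
      volume (S ∩ Ioo (0 : ℝ) 1 ×ˢ Ioo (0 : ℝ) 1) := by
  have h : Prod.swap ⁻¹' S ∩ Ioo (0 : ℝ) 1 ×ˢ Ioo (0 : ℝ) 1 =
      Prod.swap ⁻¹' (S ∩ Ioo (0 : ℝ) 1 ×ˢ Ioo (0 : ℝ) 1) := by
    ext ⟨x, y⟩
    simp only [mem_preimage, mem_inter_iff, mem_prod, Prod.swap_prod_mk]
    tauto
  rw [h]
  exact (Measure.measurePreserving_swap (μ := (volume : Measure ℝ)) (ν := volume)).measure_preimage
    (hS.inter (measurableSet_Ioo.prod measurableSet_Ioo)).nullMeasurableSet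

lemma compl_volume {S : Set (ℝ × ℝ)} (hS : MeasurableSet S)
    (h : volume (S ∩ Ioo (0 : ℝ) 1 ×ˢ Ioo (0 : ℝ) 1) = ENNReal.ofReal (1 / 2)) :
    volume (Sᶜ ∩ Ioo (0 : ℝ) 1 ×ˢ Ioo (0 : ℝ) 1) = ENNReal.ofReal (1 / 2) := by
  have h1 := measure_inter_add_sdiff (μ := volume) (Ioo (0 : ℝ) 1 ×ˢ Ioo (0 : ℝ) 1) hS
  rw [inter_comm, h, sdiff_eq, inter_comm _ Sᶜ, Measure.volume_eq_prod ℝ ℝ, Measure.prod_prod,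
    vol_Ioo, mul_one] at h1
  rw [← Measure.volume_eq_prod] at h1
  have h2 : (1 : ℝ≥0∞) = ENNReal.ofReal (1 / 2) + ENNReal.ofReal (1 / 2) := by
    rw [← ENNReal.ofReal_add (by norm_num) (by norm_num)]; norm_num
  rw [h2] at h1
  exact (ENNReal.add_right_inj ENNReal.ofReal_ne_top).1 h1

/-- Full columns have area one each, so their measure is at most the area of `S`. -/
lemma full_le {S : Set (ℝ × ℝ)} (hS : MeasurableSet S) :
    volume (emptyX Sᶜ) ≤ volume (S ∩ Ioo 0 1 ×ˢ Ioo 0 1) := by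
  rw [col_fubini hS, ← setLIntegral_one]
  refine le_trans ?_ (lintegral_mono_set (fun x hx => hx.1 : emptyX Sᶜ ⊆ Ioo 0 1))
  apply setLIntegral_mono_ae' (emptyX_measurable hS.compl)
  refine ae_of_all _ fun x hx => ?_
  have h1 : Ioo (0 : ℝ) 1 ⊆ col S x ∪ col Sᶜ x := by
    intro y hy
    by_cases h : (x, y) ∈ S
    · exact Or.inl ⟨hy, h⟩
    · exact Or.inr ⟨hy, h⟩
  have h2 := (measure_mono (μ := volume) h1).trans (measure_union_le _ _)
  rwa [vol_Ioo, hx.2, add_zero] at h2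

lemma supp_le {S : Set (ℝ × ℝ)} (hS : MeasurableSet S) (hX : volume (crossX S) = 0) :
    volume (suppX S) ≤ volume (S ∩ Ioo 0 1 ×ˢ Ioo 0 1) := by
  refine (measure_mono (suppX_sub S)).trans ((measure_union_le _ _).trans ?_)
  rw [hX, add_zero]
  exact full_le hS

/-- If both empty and full columns occur in positive measure, almost every row crosses. -/
lemma rows_cross {S : Set (ℝ × ℝ)} (hS : MeasurableSet S) (hZ : volume (emptyX S) ≠ 0)
    (hF : volume (emptyX Sᶜ) ≠ 0) : volume (crossY S) = 1 := by
  have key : ∀ T : Set (ℝ × ℝ), MeasurableSet T → ∀ᵐ y : ℝ, ∀ᵐ x : ℝ,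
      x ∈ emptyX T → y ∈ Ioo (0 : ℝ) 1 → (x, y) ∉ T := by
    intro T hT
    have hm : MeasurableSet ((emptyX T ×ˢ Ioo (0 : ℝ) 1 ∩ T)ᶜ : Set (ℝ × ℝ)) :=
      (((emptyX_measurable hT).prod measurableSet_Ioo).inter hT).compl
    have h1 : ∀ᵐ p : ℝ × ℝ, p ∈ ((emptyX T ×ˢ Ioo (0 : ℝ) 1 ∩ T)ᶜ : Set (ℝ × ℝ)) := by
      rw [Measure.volume_eq_prod, Measure.ae_prod_mem_iff_ae_ae_mem hm]
      refine ae_of_all _ fun x => ?_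
      by_cases hx : x ∈ emptyX T
      · filter_upwards [measure_eq_zero_iff_ae_notMem.1 hx.2] with y hy hyy
        exact hy ⟨hyy.1.2, hyy.2⟩
      · exact ae_of_all _ fun y hyy => hx hyy.1.1
    filter_upwards [ae_slice_swap h1] with y hy
    filter_upwards [hy] with x hx h2 h3 h4
    exact hx ⟨⟨h2, h3⟩, h4⟩
  have hae : ∀ᵐ y : ℝ, y ∈ Ioo (0 : ℝ) 1 → y ∈ crossY S := by
    filter_upwards [key S hS, key Sᶜ hS.compl] with y h1 h2 hy
    refine ⟨hy, fun h => hF (measure_mono_null_ae ?_ h), fun h => hZ (measure_mono_null_ae ?_ h)⟩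
    · filter_upwards [h2] with x hx hxF
      exact ⟨hxF.1, not_not.1 (hx hxF hy)⟩
    · filter_upwards [h1] with x hx hxZ
      exact ⟨hxZ.1, hx hxZ hy⟩
  apply le_antisymm
  · exact (measure_mono (crossY_sub S)).trans vol_Ioo.le
  · rw [← vol_Ioo]; exact measure_mono_ae hae

/-- A unit vector `(a, b)` with `a + b u > 1` exists as soon as `u > 0`. -/
lemma unit_comb {u : ℝ≥0∞} (hu : u ≤ 1)
    (H : ∀ a b : ℝ, 0 ≤ a → 0 ≤ b → a ^ 2 + b ^ 2 ≤ 1 →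
      ENNReal.ofReal b * u + ENNReal.ofReal a ≤ 1) : u = 0 := by
  have hut : u ≠ ⊤ := ne_top_of_le_ne_top ENNReal.one_ne_top hu
  by_contra h0
  set v := u.toReal with hv
  have hv0 : 0 < v := ENNReal.toReal_pos h0 hut
  have hv1 : v ≤ 1 := by simpa using ENNReal.toReal_mono ENNReal.one_ne_top hu
  have hd : 0 < 1 + (v / 2) ^ 2 := by positivity
  have h := H ((1 - (v / 2) ^ 2) / (1 + (v / 2) ^ 2)) (2 * (v / 2) / (1 + (v / 2) ^ 2))
    (div_nonneg (by nlinarith) hd.le) (by positivity) (by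
      apply le_of_eq; field_simp; ring)
  rw [← ENNReal.ofReal_toReal hut, ← ENNReal.ofReal_mul (by positivity),
    ← ENNReal.ofReal_add (by positivity) (div_nonneg (by nlinarith) hd.le),
    ENNReal.ofReal_le_one, ← hv, div_mul_eq_mul_div, ← add_div, div_le_one hd] at h
  nlinarith

lemma crossX_le_one (S : Set (ℝ × ℝ)) : volume (crossX S) ≤ 1 :=
  (measure_mono (crossX_sub S)).trans vol_Ioo.le

lemma crossX_null {E : Set (En 2)} (hE : MeasurableSet E)
    (hP : μH[1] (essBoundary E ∩ unitSq) ≤ 1) (hY : volume (crossY (plane E)) = 1) :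
    volume (crossX (plane E)) = 0 := by
  refine unit_comb (crossX_le_one _) fun a b ha hb hab => ?_
  have h := cross_bound hE (ne_top_of_le_ne_top ENNReal.one_ne_top hP) ha hb hab
  rw [hY, mul_one] at h
  exact h.trans hP

lemma crossY_null {E : Set (En 2)} (hE : MeasurableSet E)
    (hP : μH[1] (essBoundary E ∩ unitSq) ≤ 1) (hX : volume (crossX (plane E)) = 1) :
    volume (crossY (plane E)) = 0 := by
  refine unit_comb (by rw [crossY_eq]; exact crossX_le_one _) fun a b ha hb hab => ?_
  have h := cross_bound hE (ne_top_of_le_ne_top ENNReal.one_ne_top hP) hb ha (by linarith)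
  rw [hX, mul_one, add_comm] at h
  exact h.trans hP

/-- `quarter_bound` in terms of empty and full columns. -/
lemma quarter_real {E : Set (En 2)} (hE : MeasurableSet E)
    (hP : μH[1] (essBoundary E ∩ unitSq) ≠ ⊤) {ρ : ℝ} (hρ : 0 < ρ)
    (hvol : volume (plane E ∩ Ioo 0 1 ×ˢ Ioo 0 1) = ENNReal.ofReal ρ)
    (hF : volume (emptyX (plane E)ᶜ) = 0) (hZ : volume (emptyX (plane E)) ≠ 0) :
    ∃ w : ℝ, 0 < w ∧ volume (crossX (plane E)) = ENNReal.ofReal w ∧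
      ENNReal.ofReal (Real.pi * w / 4 + ρ / w) ≤ μH[1] (essBoundary E ∩ unitSq) := by
  have hS := plane_measurable hE
  have hXt : volume (crossX (plane E)) ≠ ⊤ := fin_of_sub (crossX_sub _)
  have hX0 : volume (crossX (plane E)) ≠ 0 := by
    intro h0
    have h1 : volume (suppX (plane E)) = 0 :=
      measure_mono_null (suppX_sub _) (measure_union_null hF h0)
    have h2 : ∫⁻ x in Ioo 0 1, volume (col (plane E) x) = 0 := by
      rw [lintegral_eq_zero_iff (col_measurable hS)]
      rw [Filter.EventuallyEq, ae_restrict_iff' measurableSet_Ioo]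
      filter_upwards [measure_eq_zero_iff_ae_notMem.1 h1] with x hx hx1
      by_contra h
      exact hx ⟨hx1, h⟩
    rw [← col_fubini hS, hvol, ENNReal.ofReal_eq_zero] at h2
    linarith
  have hw : 0 < (volume (crossX (plane E))).toReal := ENNReal.toReal_pos hX0 hXt
  refine ⟨_, hw, (ENNReal.ofReal_toReal hXt).symm, ?_⟩
  have h := quarter_bound hE hP ?_ ?_ hw (ENNReal.ofReal_toReal hXt).symm
  · rw [hvol, ← ENNReal.ofReal_div_of_pos hw, ← ENNReal.ofReal_add (by positivity)
      (by positivity)] at h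
    exact h
  · filter_upwards [measure_eq_zero_iff_ae_notMem.1 hF] with x hx h1 h2
    by_contra h3
    exact h2 ⟨h1, h3, fun h4 => hx ⟨h1, h4⟩⟩
  · intro h
    refine hZ (measure_mono_null (fun x hx => ?_) h)
    exact ⟨hx.1, fun h2 => h2.2.1 hx.2⟩

/-! ### Sets of area one half and of area `9π/100` -/

/-- `π w / 4 + 1 / (2 w) ≤ 1` has no positive solution, since `π > 2`. -/
lemma half_contra {w : ℝ} (hw : 0 < w) {P : ℝ≥0∞} (hP : P ≤ 1)
    (h : ENNReal.ofReal (Real.pi * w / 4 + 1 / 2 / w) ≤ P) : False := by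
  have h1 := ENNReal.ofReal_le_one.1 (h.trans hP)
  have h2 : (Real.pi * w / 4 + 1 / 2 / w) * w ≤ 1 * w := mul_le_mul_of_nonneg_right h1 hw.le
  have h3 : (Real.pi * w / 4 + 1 / 2 / w) * w = Real.pi * w ^ 2 / 4 + 1 / 2 := by
    field_simp
  have h4 := Real.pi_gt_three
  nlinarith [sq_nonneg (w - 2 / 3), sq_nonneg w]

/-- A set of area `1/2` and perimeter at most `1` is essentially contained in a union of columns,
or of rows, of total measure `1/2`. -/
lemma half_structure {E : Set (En 2)} (hE : MeasurableSet E)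
    (hP : μH[1] (essBoundary E ∩ unitSq) ≤ 1)
    (hvol : volume (plane E ∩ Ioo 0 1 ×ˢ Ioo 0 1) = ENNReal.ofReal (1 / 2)) :
    volume (suppX (plane E)) ≤ ENNReal.ofReal (1 / 2) ∨
      volume (suppX (Prod.swap ⁻¹' plane E)) ≤ ENNReal.ofReal (1 / 2) := by
  have hS := plane_measurable hE
  have hPt := ne_top_of_le_ne_top ENNReal.one_ne_top hP
  by_cases hF : volume (emptyX (plane E)ᶜ) = 0 <;> by_cases hZ : volume (emptyX (plane E)) = 0
  · right
    have hX : volume (crossX (plane E)) = 1 := by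
      apply le_antisymm (crossX_le_one _)
      rw [← vol_Ioo]
      refine (measure_mono ((Ioo_split (plane E)).trans
        (union_subset_union_right _ (suppX_sub _)))).trans ?_
      refine (measure_union_le _ _).trans ?_
      rw [hZ, zero_add]
      refine (measure_union_le _ _).trans ?_
      rw [hF, zero_add]
    have hY := crossY_null hE hP hX
    rw [← hvol, ← swap_volume hS]
    exact supp_le (measurable_swap hS) hY
  · obtain ⟨w, hw, -, h⟩ := quarter_real hE hPt (by norm_num) hvol hF hZ
    exact (half_contra hw hP h).elim
  · have hP' : μH[1] (essBoundary Eᶜ ∩ unitSq) ≤ 1 := by rwa [essBoundary_compl hE]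
    obtain ⟨w, hw, -, h⟩ := quarter_real hE.compl
      (ne_top_of_le_ne_top ENNReal.one_ne_top hP') (by norm_num) (compl_volume hS hvol)
      (by change volume (emptyX (plane E)ᶜᶜ) = 0; rwa [compl_compl]) hF
    exact (half_contra hw hP' h).elim
  · left
    rw [← hvol]
    exact supp_le hS (crossX_null hE hP (rows_cross hS hZ hF))

/-- A set with the area and at most the perimeter of a quarter disc of radius `3/5` cannot be
essentially contained in columns of total measure `1/2`: equality in `π w / 4 + ρ / w ≤ P` forces
`w = 3/5`. -/
lemma quarter_contra {E : Set (En 2)} (hE : MeasurableSet E)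
    (hP : μH[1] (essBoundary E ∩ unitSq) ≤ ENNReal.ofReal (3 * Real.pi / 10))
    (hvol : volume (plane E ∩ Ioo 0 1 ×ˢ Ioo 0 1) = ENNReal.ofReal (9 * Real.pi / 100))
    (hsupp : volume (suppX (plane E)) ≤ ENNReal.ofReal (1 / 2)) : False := by
  have hS := plane_measurable hE
  have hPt := ne_top_of_le_ne_top ENNReal.ofReal_ne_top hP
  have hpi := Real.pi_pos
  have hZ : volume (emptyX (plane E)) ≠ 0 := by
    intro h0
    have h1 := (measure_mono (μ := volume) (Ioo_split (plane E))).trans (measure_union_le _ _)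
    rw [h0, zero_add, vol_Ioo] at h1
    have h2 := ENNReal.one_le_ofReal.1 (h1.trans hsupp)
    norm_num at h2
  by_cases hF : volume (emptyX (plane E)ᶜ) = 0
  · obtain ⟨w, hw, hwX, h⟩ := quarter_real hE hPt (by positivity) hvol hF hZ
    have h1 := (ENNReal.ofReal_le_ofReal_iff (by positivity)).1 (h.trans hP)
    have hw2 : w ≤ 1 / 2 := by
      have hsub : crossX (plane E) ⊆ suppX (plane E) := fun x hx => ⟨hx.1, hx.2.1⟩
      have h2 := (measure_mono (μ := volume) hsub).trans hsupp
      rw [hwX] at h2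
      exact (ENNReal.ofReal_le_ofReal_iff (by norm_num)).1 h2
    have h2 := mul_le_mul_of_nonneg_right h1 hw.le
    have h3 : (Real.pi * w / 4 + 9 * Real.pi / 100 / w) * w =
        Real.pi * (w ^ 2 / 4 + 9 / 100) := by
      field_simp
    have h4 : 3 * Real.pi / 10 * w = Real.pi * (3 / 10 * w) := by ring
    rw [h3, h4] at h2
    have h5 := le_of_mul_le_mul_left h2 hpi
    nlinarith [sq_nonneg (5 * w - 3)]
  · have hY := rows_cross hS hZ hF
    have h := cross_bound hE hPt (a := 1) (b := 0) zero_le_one le_rfl (by norm_num)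
    rw [hY] at h
    have h1 := h.trans hP
    simp only [ENNReal.ofReal_zero, zero_mul, ENNReal.ofReal_one, mul_one, zero_add] at h1
    have h2 := ENNReal.one_le_ofReal.1 h1
    linarith [Real.pi_lt_d2]

/-! ### Exchanging the coordinates -/

/-- The isometry of the plane exchanging the two coordinates. -/
def swapIso : En 2 ≃ₗᵢ[ℝ] En 2 := LinearIsometryEquiv.piLpCongrLeft 2 ℝ ℝ (Equiv.swap 0 1)

lemma swapIso_zero (x : En 2) : swapIso x 0 = x 1 := by
  simp [swapIso, LinearIsometryEquiv.piLpCongrLeft_apply, Equiv.piCongrLeft'_apply]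

lemma swapIso_one (x : En 2) : swapIso x 1 = x 0 := by
  simp [swapIso, LinearIsometryEquiv.piLpCongrLeft_apply, Equiv.piCongrLeft'_apply]

lemma essBoundary_swap {E : Set (En 2)} (hE : MeasurableSet E) :
    essBoundary (swapIso ⁻¹' E) = swapIso ⁻¹' essBoundary E := by
  have hb : ∀ (x : En 2) (r : ℝ), ball x r = swapIso ⁻¹' ball (swapIso x) r := by
    intro x r
    ext y
    simp only [mem_preimage, mem_ball, LinearIsometryEquiv.dist_map]
  have hr : ∀ (x : En 2) (r : ℝ), volume (swapIso ⁻¹' E ∩ ball x r) / volume (ball x r) =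
      volume (E ∩ ball (swapIso x) r) / volume (ball (swapIso x) r) := by
    intro x r
    rw [hb x r, ← preimage_inter,
      swapIso.measurePreserving.measure_preimage (hE.inter measurableSet_ball).nullMeasurableSet,
      swapIso.measurePreserving.measure_preimage measurableSet_ball.nullMeasurableSet]
  ext x
  simp only [essBoundary, mem_ofPred_eq, mem_preimage, hr]

lemma swap_perim {E : Set (En 2)} (hE : MeasurableSet E) :
    μH[1] (essBoundary (swapIso ⁻¹' E) ∩ unitSq) = μH[1] (essBoundary E ∩ unitSq) := by
  have h : unitSq = swapIso ⁻¹' unitSq := by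
    ext x
    simp only [unitSq, mem_preimage, mem_ofPred_eq, swapIso_zero, swapIso_one]
    tauto
  rw [essBoundary_swap hE]
  conv_lhs => rw [h, ← preimage_inter]
  exact swapIso.toIsometryEquiv.hausdorffMeasure_preimage 1 _

lemma plane_swap (E : Set (En 2)) : plane (swapIso ⁻¹' E) = Prod.swap ⁻¹' plane E := by
  ext p
  have h : swapIso (pt 1 0 p) = pt 1 0 p.swap := by
    ext i
    fin_cases i
    · change swapIso (pt 1 0 p) 0 = _
      rw [swapIso_zero]; simp [pt]
    · change swapIso (pt 1 0 p) 1 = _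
      rw [swapIso_one]; simp [pt]
  simp only [plane, mem_preimage, h]

/-! ### Measurable hulls -/

/-- Minimizers are not assumed measurable. A set between `E` and its measurable hull has the same
volume as `E` inside every measurable set. -/
lemma hull_inter {E A : Set (En 2)} (h1 : E ⊆ A) (h2 : A ⊆ toMeasurable volume E)
    {B : Set (En 2)} (hB : MeasurableSet B) : volume (A ∩ B) = volume (E ∩ B) := by
  apply le_antisymm _ (measure_mono (inter_subset_inter_left _ h1))
  rw [← Measure.measure_toMeasurable_inter_of_sFinite hB E]
  exact measure_mono (inter_subset_inter_left _ h2)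

lemma hull_ess {E A : Set (En 2)} (h1 : E ⊆ A) (h2 : A ⊆ toMeasurable volume E) :
    essBoundary A = essBoundary E := by
  ext x
  simp only [essBoundary, hull_inter h1 h2 measurableSet_ball]

lemma hull_volume {E A : Set (En 2)} (h1 : E ⊆ A) (h2 : A ⊆ toMeasurable volume E)
    (hA : MeasurableSet A) (hE : E ⊆ unitSq) :
    volume (plane A ∩ Ioo 0 1 ×ˢ Ioo 0 1) = volume E := by
  rw [← plane_unitSq]
  change volume (plane (A ∩ unitSq)) = _
  rw [plane_volume (hA.inter unitSq_open.measurableSet),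
    hull_inter h1 h2 unitSq_open.measurableSet, inter_eq_left.2 hE]

lemma perim_unitSq (E : Set (En 2)) : perim E unitSq = μH[1] (essBoundary E ∩ unitSq) := by
  rw [perim]; norm_num

lemma suppX_mono {S T : Set (ℝ × ℝ)} (h : S ⊆ T) : suppX S ⊆ suppX T := fun x hx =>
  ⟨hx.1, fun h0 => hx.2 (measure_mono_null (t := col T x) (fun _ hy => ⟨hy.1, h hy.2⟩) h0)⟩

/-- The open unit square is not an isoperimetrically foliated domain:
no selection of isoperimetric minimizers is nested with `H¹`-a.e. disjoint boundaries. -/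
theorem unit_square_not_foliated :
    ¬ ∃ Esel : ℝ → Set (En 2), IsIsopFoliation unitSq Esel := by
  rintro ⟨Esel, hmin, hnest⟩
  have hpi0 := Real.pi_pos
  have hpi := Real.pi_lt_d2
  have hhalf : ENNReal.ofReal (1 / 2) < volume unitSq := by
    rw [volume_unitSq, ENNReal.ofReal_lt_one]; norm_num
  have hquart : ENNReal.ofReal (9 * Real.pi / 100) < volume unitSq := by
    rw [volume_unitSq, ENNReal.ofReal_lt_one]; linarith
  obtain ⟨hs1, hv1, hm1⟩ := hmin (1 / 2) (by norm_num) hhalf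
  obtain ⟨hs2, hv2, hm2⟩ := hmin (9 * Real.pi / 100) (by positivity) hquart
  have hsub : Esel (9 * Real.pi / 100) ⊆ Esel (1 / 2) :=
    (hnest _ _ (by positivity) (by linarith) hhalf).1
  set E1 := Esel (1 / 2)
  set E2 := Esel (9 * Real.pi / 100)
  have hp1 := hm1 halfSq inter_subset_left halfSq_volume
  have hp2 := hm2 quarterDisc inter_subset_left quarterDisc_volume
  rw [perim_unitSq, perim_unitSq] at hp1 hp2
  -- nested measurable hulls of the two minimizers
  set A1 := toMeasurable volume E1
  set A2 := toMeasurable volume E2 ∩ A1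
  have hA1 : MeasurableSet A1 := measurableSet_toMeasurable _ _
  have hA2 : MeasurableSet A2 := (measurableSet_toMeasurable _ _).inter hA1
  have h11 : E1 ⊆ A1 := subset_toMeasurable _ _
  have h21 : E2 ⊆ A2 := subset_inter (subset_toMeasurable _ _) (hsub.trans h11)
  have h22 : A2 ⊆ toMeasurable volume E2 := inter_subset_left
  have h12 : plane A2 ⊆ plane A1 := preimage_mono inter_subset_right
  have hP1 : μH[1] (essBoundary A1 ∩ unitSq) ≤ 1 := by
    rw [hull_ess h11 subset_rfl]; exact hp1.trans halfSq_perim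
  have hP2 : μH[1] (essBoundary A2 ∩ unitSq) ≤ ENNReal.ofReal (3 * Real.pi / 10) := by
    rw [hull_ess h21 h22]; exact hp2.trans quarterDisc_perim
  have hV1 := (hull_volume h11 subset_rfl hA1 hs1).trans hv1
  have hV2 := (hull_volume h21 h22 hA2 hs2).trans hv2
  rcases half_structure hA1 hP1 hV1 with h | h
  · exact quarter_contra hA2 hP2 hV2 ((measure_mono (suppX_mono h12)).trans h)
  · refine quarter_contra (swapIso.continuous.measurable hA2) ((swap_perim hA2).trans_le hP2) ?_ ?_
    · rw [plane_swap, swap_volume (plane_measurable hA2)]; exact hV2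
    · rw [plane_swap]
      exact (measure_mono (suppX_mono (preimage_mono h12))).trans h
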